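/- arXiv:2507.18991 — 3 statements merged into one kernel-verified Lean document; each statement's English description precedes it below -/
import Mathlib

section
/- Let n ≥ 2, let u be a nonzero harmonic polynomial on ℝⁿ and let v be an entire harmonic function on ℝⁿ such that Z(u) ⊆ Z(v). Suppose there exist γ ≥ 0 and C > 0 such that |v(x)| ≤ C(1+|x|)^γ · |u(x)| for all x ∈ ℝⁿ (i.e. the ratio v/u satisfies |v/u|(x) ≤ C(1+|x|)^γ). Then there exists a polynomial R of total degree at most ⌊γ⌋ such that v(x) = u(x)·R(x) for all x ∈ ℝⁿ. -/
open MeasureTheory Metric Filter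

/-- The Laplacian of `u : ℝⁿ → ℝ` at `x`, as the sum of second partial derivatives. -/
noncomputable def lapl {n : ℕ} (u : EuclideanSpace ℝ (Fin n) → ℝ)
    (x : EuclideanSpace ℝ (Fin n)) : ℝ :=
  ∑ i, fderiv ℝ (fun y => fderiv ℝ u y (EuclideanSpace.single i 1)) x (EuclideanSpace.single i 1)

/-- `u` is harmonic on all of ℝⁿ: it is C² and its Laplacian vanishes identically. -/
def HarmonicFn {n : ℕ} (u : EuclideanSpace ℝ (Fin n) → ℝ) : Prop :=
  ContDiff ℝ 2 u ∧ ∀ x, lapl u x = 0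

/-- `u` is harmonic on the (open) set `Ω`: it is C² on `Ω` and its Laplacian vanishes on `Ω`. -/
def HarmonicFnOn {n : ℕ} (u : EuclideanSpace ℝ (Fin n) → ℝ)
    (Ω : Set (EuclideanSpace ℝ (Fin n))) : Prop :=
  ContDiffOn ℝ 2 u Ω ∧ ∀ x ∈ Ω, lapl u x = 0

/-- A polynomial `P ∈ ℝ[x₁,…,xₙ]` is harmonic if `∑ i, ∂²P/∂xᵢ²` is the zero polynomial. -/
def IsHarmonicPoly {n : ℕ} (P : MvPolynomial (Fin n) ℝ) : Prop :=
  ∑ i, MvPolynomial.pderiv i (MvPolynomial.pderiv i P) = 0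

/-- The polynomial function on ℝⁿ associated with `P ∈ ℝ[x₁,…,xₙ]`. -/
noncomputable def polyFun {n : ℕ} (P : MvPolynomial (Fin n) ℝ)
    (x : EuclideanSpace ℝ (Fin n)) : ℝ :=
  MvPolynomial.eval (fun i => x i) P

lemma aux_dense {σ : Type*} [Finite σ] (P : MvPolynomial σ ℝ) (hP : P ≠ 0)
    (U : Set (σ → ℝ)) (hU : IsOpen U) (hne : U.Nonempty) :
    ∃ x ∈ U, MvPolynomial.eval x P ≠ 0 := by
  cases nonempty_fintype σ
  by_contra! H
  obtain ⟨x, hx⟩ := hne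
  obtain ⟨ε, hε, hb⟩ := Metric.isOpen_iff.1 hU x hx
  apply hP
  refine MvPolynomial.funext_set (fun i => Metric.ball (x i) ε) (fun i => ?_) (fun y hy => ?_)
  · rw [Real.ball_eq_Ioo]; exact Set.Ioo_infinite (by linarith)
  · rw [map_zero]
    apply H
    apply hb
    rw [Metric.mem_ball, dist_pi_lt_iff hε]
    intro i
    exact hy i trivial

open Polynomial in
lemma aux_bezout {R : Type*} [CommRing R] [IsDomain R] [UniqueFactorizationMonoid R]
    (f q : R[X]) (hf : Irreducible f) (hd : f.natDegree ≠ 0) (hq : ¬ f ∣ q) :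
    ∃ a b r, r ≠ 0 ∧ f * a + q * b = C r := by
  classical
  let _ : NormalizedGCDMonoid R := Classical.choice inferInstance
  have hp := hf.isPrimitive hd
  let K := FractionRing R
  have hinj : Function.Injective (algebraMap R K) := IsFractionRing.injective R K
  have h1 : Irreducible (f.map (algebraMap R K)) :=
    (hp.irreducible_iff_irreducible_map_fraction_map (K := K)).1 hf
  have h2 : ¬ f.map (algebraMap R K) ∣ q.map (algebraMap R K) := fun h =>
    hq ((hp.dvd_iff_fraction_map_dvd_fraction_map K).2 h)
  have h3 : IsCoprime (f.map (algebraMap R K)) (q.map (algebraMap R K)) :=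
    (h1.coprime_iff_not_dvd).2 h2
  have h4 := resultant_ne_zero _ _ h3
  rw [natDegree_map_eq_of_injective hinj, natDegree_map_eq_of_injective hinj,
    resultant_map_map] at h4
  obtain ⟨a, b, -, -, h⟩ := exists_mul_add_mul_eq_C_resultant f q le_rfl le_rfl (Or.inl hd)
  exact ⟨a, b, _, fun h0 => h4 (by rw [h0, map_zero]), h⟩

open MvPolynomial in
lemma aux_dvd0 (n : ℕ) (f q : MvPolynomial (Fin (n+1)) ℝ) (hf : Irreducible f)
    (x : Fin n → ℝ) (s t : ℝ) (hs : eval (Fin.cons s x : Fin (n+1) → ℝ) f < 0)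
    (ht : 0 < eval (Fin.cons t x : Fin (n+1) → ℝ) f)
    (hZ : ∀ y, eval y f = 0 → eval y q = 0) : f ∣ q := by
  by_contra hq
  have key : ∀ (y : Fin n → ℝ) (r : ℝ) g, eval (Fin.cons r y : Fin (n+1) → ℝ) g
      = Polynomial.eval r (Polynomial.map (eval y) (finSuccEquiv ℝ n g)) := by
    intro y r g; exact eval_eq_eval_mv_eval' y r g
  have hd : (finSuccEquiv ℝ n f).natDegree ≠ 0 := by
    intro h0
    obtain ⟨c, hc⟩ := Polynomial.natDegree_eq_zero.1 h0
    rw [key, ← hc] at hs ht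
    simp at hs ht
    linarith
  obtain ⟨a, b, r, hr, h⟩ := aux_bezout (finSuccEquiv ℝ n f) (finSuccEquiv ℝ n q)
    ((MulEquiv.irreducible_iff (finSuccEquiv ℝ n)).2 hf) hd
    (fun h => hq ((map_dvd_iff (finSuccEquiv ℝ n)).1 h))
  have hc : ∀ r : ℝ, Continuous fun y : Fin n → ℝ => eval (Fin.cons r y : Fin (n+1) → ℝ) f := by
    intro r
    refine (MvPolynomial.continuous_eval f).comp ?_
    exact Continuous.finCons continuous_const continuous_id
  have hc2 : ∀ y : Fin n → ℝ, Continuous fun r : ℝ => eval (Fin.cons r y : Fin (n+1) → ℝ) f := by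
    intro r
    refine (MvPolynomial.continuous_eval f).comp ?_
    exact Continuous.finCons continuous_id continuous_const
  obtain ⟨y, ⟨hy1, hy2⟩, hy3⟩ := aux_dense r hr
    {y | eval (Fin.cons s y : Fin (n+1) → ℝ) f < 0 ∧ 0 < eval (Fin.cons t y : Fin (n+1) → ℝ) f}
    ((isOpen_lt (hc s) continuous_const).inter (isOpen_lt continuous_const (hc t))) ⟨x, hs, ht⟩
  have hiv := mem_range_of_exists_le_of_exists_ge (hc2 y) ⟨s, hy1.le⟩ ⟨t, hy2.le⟩
  obtain ⟨z, hz⟩ := hiv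
  have hz2 := hZ _ hz
  have h5 := congrArg (fun p => Polynomial.eval z (Polynomial.map (eval y) p)) h
  simp only [Polynomial.map_add, Polynomial.map_mul, Polynomial.eval_add, Polynomial.eval_mul,
    ← key, hz2, Polynomial.map_C, Polynomial.eval_C] at h5
  simp only at hz
  rw [hz] at h5
  apply hy3
  simp at h5
  exact h5.symm

open MvPolynomial in
lemma aux_dvd1 (n : ℕ) (i : Fin n) (f q : MvPolynomial (Fin n) ℝ) (hf : Irreducible f)
    (x : Fin n → ℝ) (t : ℝ) (hs : eval x f < 0)
    (ht : 0 < eval (Function.update x i t) f)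
    (hZ : ∀ y, eval y f = 0 → eval y q = 0) : f ∣ q := by
  obtain _ | n := n
  · exact i.elim0
  let σ := Equiv.swap 0 i
  have h := aux_dvd0 n (renameEquiv ℝ σ f) (renameEquiv ℝ σ q)
    ((MulEquiv.irreducible_iff (renameEquiv ℝ σ)).2 hf) (fun j => x (σ j.succ)) (x i) t
    ?_ ?_ ?_
  · exact (map_dvd_iff (renameEquiv ℝ σ)).1 h
  · rw [renameEquiv_apply, eval_rename]
    convert hs using 2
    refine congrArg eval ?_
    funext j
    obtain ⟨k, rfl⟩ := σ.surjective j
    simp only [Function.comp, σ, Equiv.swap_apply_self]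
    refine Fin.cases ?_ (fun k => ?_) k <;> simp
  · rw [renameEquiv_apply, eval_rename]
    convert ht using 2
    refine congrArg eval ?_
    funext j
    obtain ⟨k, rfl⟩ := σ.surjective j
    simp only [Function.comp, σ, Equiv.swap_apply_self]
    refine Fin.cases ?_ (fun k => ?_) k
    · simp
    · rw [Fin.cons_succ, Function.update_of_ne]
      intro h
      have := congrArg (Equiv.swap 0 i) h
      simp [Fin.succ_ne_zero] at this
  · intro y hy
    rw [renameEquiv_apply, eval_rename] at *
    exact hZ _ hy

open MvPolynomial in
lemma aux_dvd (n : ℕ) (f q : MvPolynomial (Fin n) ℝ) (hf : Irreducible f)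
    (x y : Fin n → ℝ) (hs : eval x f < 0) (ht : 0 < eval y f)
    (hZ : ∀ y, eval y f = 0 → eval y q = 0) : f ∣ q := by
  by_contra hq
  have H : ∀ (i : Fin n) x t, eval x f < 0 → eval (Function.update x i t) f ≤ 0 := by
    intro i x t h
    by_contra! h2
    exact hq (aux_dvd1 n i f q hf x t h h2 hZ)
  have hcont := MvPolynomial.continuous_eval f
  let W := interior {x | eval x f ≤ 0}
  have hW : ∀ (i : Fin n) x t, x ∈ W → Function.update x i t ∈ W := by
    intro i x t hx
    by_contra hn
    have hcl : Function.update x i t ∈ closure {z | 0 < eval z f} := by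
      have : {z | 0 < eval z f} = {x | eval x f ≤ 0}ᶜ := by ext; simp
      rw [this, closure_compl]; exact hn
    rw [_root_.mem_closure_iff] at hcl
    obtain ⟨z, hz1, hz2⟩ := hcl {z | Function.update z i (x i) ∈ W}
      (isOpen_interior.preimage (by fun_prop)) (by simpa using hx)
    have hc2 : Continuous fun w : Fin n → ℝ => Function.update w i (z i) := by fun_prop
    obtain ⟨w, ⟨hw1, hw2⟩, hw3⟩ := aux_dense f hf.ne_zero
      (W ∩ {w | 0 < eval (Function.update w i (z i)) f})
      (isOpen_interior.inter (isOpen_lt continuous_const (hcont.comp hc2)))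
      ⟨_, hz1, by simpa using hz2⟩
    have hw4 : eval w f < 0 := lt_of_le_of_ne
      (interior_subset hw1 : w ∈ {x | eval x f ≤ 0}) hw3
    exact absurd (H i w (z i) hw4) (not_le.2 hw2)
  have hx : x ∈ W := by
    rw [mem_interior]
    exact ⟨{x | eval x f < 0}, fun z (hz : eval z f < 0) => (hz.le : eval z f ≤ 0), isOpen_lt hcont continuous_const, hs⟩
  have hall : ∀ s : Finset (Fin n), (fun i => if i ∈ s then y i else x i) ∈ W := by
    intro s
    induction s using Finset.induction_on with
    | empty => simpa using hx
    | insert a s ha ih =>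
      convert hW a _ (y a) ih using 1
      funext j
      by_cases hj : j = a
      · subst hj; simp
      · simp [hj]
  have := interior_subset (hall Finset.univ)
  simp at this
  linarith

/-! ### Polynomial functions -/

lemma polyFun_hasFDerivAt {n : ℕ} (P : MvPolynomial (Fin n) ℝ) (x : EuclideanSpace ℝ (Fin n)) :
    ∃ L : EuclideanSpace ℝ (Fin n) →L[ℝ] ℝ, HasFDerivAt (polyFun P) L x ∧
      ∀ i, L (EuclideanSpace.single i 1) = polyFun (MvPolynomial.pderiv i P) x := by
  induction P using MvPolynomial.induction_on with
  | C a =>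
    refine ⟨0, ?_, fun i => by simp [polyFun]⟩
    have : polyFun (MvPolynomial.C a : MvPolynomial (Fin n) ℝ) = fun _ => a := by
      funext y; simp [polyFun]
    rw [this]; exact hasFDerivAt_const _ _
  | add p q hp hq =>
    obtain ⟨L, h1, h2⟩ := hp
    obtain ⟨M, h3, h4⟩ := hq
    refine ⟨L + M, ?_, fun i => by simp [h2, h4, polyFun]⟩
    have : polyFun (p + q) = fun y => polyFun p y + polyFun q y := by
      funext y; simp [polyFun]
    rw [this]; exact h1.add h3
  | mul_X p j hp =>
    obtain ⟨L, h1, h2⟩ := hp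
    have : polyFun (p * MvPolynomial.X j) = fun y => polyFun p y * y j := by
      funext y; simp [polyFun]
    rw [this]
    have h3 : HasFDerivAt (fun y : EuclideanSpace ℝ (Fin n) => y j)
      (EuclideanSpace.proj j : EuclideanSpace ℝ (Fin n) →L[ℝ] ℝ) x :=
      (EuclideanSpace.proj j : EuclideanSpace ℝ (Fin n) →L[ℝ] ℝ).hasFDerivAt
    refine ⟨_, h1.mul h3, fun i => ?_⟩
    by_cases hij : i = j
    · subst hij
      simp [h2, polyFun]
    · have h6 : MvPolynomial.pderiv i (MvPolynomial.X j : MvPolynomial (Fin n) ℝ) = 0 :=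
        MvPolynomial.pderiv_X_of_ne (Ne.symm hij)
      simp [h2, polyFun, h6, Ne.symm hij]

lemma polyFun_contDiff {n : ℕ} (P : MvPolynomial (Fin n) ℝ) {k : WithTop ℕ∞} :
    ContDiff ℝ k (polyFun P) := by
  induction P using MvPolynomial.induction_on with
  | C a =>
    have : polyFun (MvPolynomial.C a : MvPolynomial (Fin n) ℝ) = fun _ => a := by
      funext y; simp [polyFun]
    rw [this]; exact contDiff_const
  | add p q hp hq =>
    have : polyFun (p + q) = fun y => polyFun p y + polyFun q y := by
      funext y; simp [polyFun]
    rw [this]; exact hp.add hq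
  | mul_X p j hp =>
    have : polyFun (p * MvPolynomial.X j) = fun y => polyFun p y * y j := by
      funext y; simp [polyFun]
    rw [this]
    exact hp.mul (EuclideanSpace.proj j : EuclideanSpace ℝ (Fin n) →L[ℝ] ℝ).contDiff

lemma polyFun_fderiv {n : ℕ} (P : MvPolynomial (Fin n) ℝ) (x : EuclideanSpace ℝ (Fin n))
    (i : Fin n) : fderiv ℝ (polyFun P) x (EuclideanSpace.single i 1) =
      polyFun (MvPolynomial.pderiv i P) x := by
  obtain ⟨L, h1, h2⟩ := polyFun_hasFDerivAt P x
  rw [h1.fderiv, h2]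

/-! ### Radial kernels -/

open scoped ContDiff in
/-- Smooth profiles vanishing on `[1,∞)`. -/
def GoodK (h : ℝ → ℝ) : Prop := ContDiff ℝ ∞ h ∧ ∀ s, 1 ≤ s → h s = 0

/-- Radial function with a given profile. -/
noncomputable def rad {n : ℕ} (h : ℝ → ℝ) (y : EuclideanSpace ℝ (Fin n)) : ℝ := h (‖y‖ ^ 2)

lemma GoodK.anti {h : ℝ → ℝ} (hh : GoodK h) :
    ∃ H, GoodK H ∧ ∀ s, HasDerivAt H (h s) s := by
  have hc : Continuous h := hh.1.continuous
  have hd : ∀ s, HasDerivAt (fun s => ∫ t in (1:ℝ)..s, h t) (h s) s := fun s =>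
    intervalIntegral.integral_hasDerivAt_right (hc.intervalIntegrable _ _)
      (hc.stronglyMeasurableAtFilter _ _) hc.continuousAt
  refine ⟨_, ⟨?_, ?_⟩, hd⟩
  · rw [contDiff_infty_iff_deriv]
    refine ⟨fun s => (hd s).differentiableAt, ?_⟩
    have : deriv (fun s => ∫ t in (1:ℝ)..s, h t) = h := funext fun s => (hd s).deriv
    rw [this]; exact hh.1
  · intro s hs
    rw [intervalIntegral.integral_congr (g := fun _ => 0)]
    · simp
    · intro t ht
      rw [Set.uIcc_of_le hs] at ht
      exact hh.2 t ht.1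

lemma GoodK.contDiff_rad {n : ℕ} {h : ℝ → ℝ} (hh : GoodK h) {k : ℕ∞} :
    ContDiff ℝ k (rad h : EuclideanSpace ℝ (Fin n) → ℝ) :=
  (hh.1.of_le (by exact_mod_cast le_top)).comp (contDiff_norm_sq ℝ)

lemma GoodK.continuous_rad {n : ℕ} {h : ℝ → ℝ} (hh : GoodK h) :
    Continuous (rad h : EuclideanSpace ℝ (Fin n) → ℝ) :=
  (hh.contDiff_rad (k := 0)).continuous

lemma GoodK.rad_zero {n : ℕ} {h : ℝ → ℝ} (hh : GoodK h) (y : EuclideanSpace ℝ (Fin n))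
    (hy : 1 ≤ ‖y‖) : rad h y = 0 :=
  hh.2 _ (by nlinarith)

lemma GoodK.compact_rad {n : ℕ} {h : ℝ → ℝ} (hh : GoodK h) :
    HasCompactSupport (rad h : EuclideanSpace ℝ (Fin n) → ℝ) := by
  refine HasCompactSupport.intro (isCompact_closedBall 0 1) (fun y hy => hh.rad_zero y ?_)
  simp at hy; exact hy.le

lemma rad_fderiv {n : ℕ} {h H : ℝ → ℝ} (hH : ∀ s, HasDerivAt H (h s) s)
    (y : EuclideanSpace ℝ (Fin n)) (i : Fin n) :
    fderiv ℝ (rad H) y (EuclideanSpace.single i 1) = 2 * y i * rad h y := by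
  have h1 := (hH (‖y‖ ^ 2)).comp_hasFDerivAt y (hasStrictFDerivAt_norm_sq y).hasFDerivAt
  have h2 : HasFDerivAt (rad H) _ y := h1
  rw [h2.fderiv]
  simp [rad, PiLp.inner_apply]
  ring

lemma rad_integrable {n : ℕ} {h : ℝ → ℝ} (hh : GoodK h) {f : EuclideanSpace ℝ (Fin n) → ℝ}
    (hf : Continuous f) : Integrable (fun y => f y * rad h y) :=
  (hf.mul hh.continuous_rad).integrable_of_hasCompactSupport hh.compact_rad.mul_left

lemma rad_ibp {n : ℕ} {h H : ℝ → ℝ} (hh : GoodK h) (hHg : GoodK H)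
    (hH : ∀ s, HasDerivAt H (h s) s) {f : EuclideanSpace ℝ (Fin n) → ℝ}
    (hf : ContDiff ℝ 1 f) (i : Fin n) :
    2 * ∫ y, (y i * f y) * rad h y =
      - ∫ y, fderiv ℝ f y (EuclideanSpace.single i 1) * rad H y := by
  have hci : Continuous fun y : EuclideanSpace ℝ (Fin n) => y i := by fun_prop
  have hfd : Continuous fun y => fderiv ℝ f y (EuclideanSpace.single i 1) :=
    (hf.continuous_fderiv one_ne_zero).clm_apply continuous_const
  rw [← integral_mul_fderiv_eq_neg_fderiv_mul_of_integrable, ← integral_const_mul]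
  · congr 1; funext y; rw [rad_fderiv hH]; ring
  · exact rad_integrable hHg hfd
  · simp_rw [rad_fderiv hH]
    have := rad_integrable hh ((hci.const_mul 2).mul hf.continuous)
    refine this.congr (Eventually.of_forall fun y => ?_)
    simp; ring
  · exact rad_integrable hHg hf.continuous
  · exact fun x _ => (hf.differentiable one_ne_zero) x
  · exact fun x _ => ((hHg.contDiff_rad (k := 1)).differentiable (by simp)) x

/-- Integration of polynomials against a radial kernel. -/
noncomputable def Jint {n : ℕ} (h : ℝ → ℝ) (hh : GoodK h) : MvPolynomial (Fin n) ℝ →ₗ[ℝ] ℝ where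
  toFun Q := ∫ y, polyFun Q y * rad h y
  map_add' p q := by
    rw [← integral_add (rad_integrable hh (polyFun_contDiff (k := 0) p).continuous)
      (rad_integrable hh (polyFun_contDiff (k := 0) q).continuous)]
    congr 1; funext y; simp [polyFun]; ring
  map_smul' c p := by
    rw [smul_eq_mul, ← integral_const_mul]
    congr 1; funext y; simp [polyFun]; ring

lemma Jint_ibp {n : ℕ} {h H : ℝ → ℝ} (hh : GoodK h) (hHg : GoodK H)
    (hH : ∀ s, HasDerivAt H (h s) s) (Q : MvPolynomial (Fin n) ℝ) (i : Fin n) :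
    2 * Jint h hh (MvPolynomial.X i * Q) = - Jint H hHg (MvPolynomial.pderiv i Q) := by
  have := rad_ibp hh hHg hH (polyFun_contDiff (k := 1) Q) i
  simp_rw [polyFun_fderiv] at this
  simp only [Jint, LinearMap.coe_mk, AddHom.coe_mk]
  rw [← this]
  congr 2; funext y; simp [polyFun]

open MvPolynomial in
lemma Jint_orth {n : ℕ} (P : MvPolynomial (Fin n) ℝ) (m : ℕ) (hP : IsHarmonicPoly P)
    (hm : P.IsHomogeneous m) (k : ℕ) : ∀ (G : MvPolynomial (Fin n) ℝ) (_ : G.IsHomogeneous k)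
    (_ : k < m) (h : ℝ → ℝ) (hh : GoodK h), Jint h hh (P * G) = 0 := by
  induction k using Nat.strong_induction_on with
  | _ k ih =>
  intro G hG hkm h hh
  obtain ⟨H, hHg, hH⟩ := hh.anti
  have e1 : m * (2 * Jint h hh (P * G)) = - Jint H hHg (∑ i, pderiv i P * pderiv i G) := by
    have : m * Jint h hh (P * G) = ∑ i, Jint h hh (X i * (pderiv i P * G)) := by
      rw [← map_sum]
      simp_rw [← mul_assoc]
      rw [← Finset.sum_mul, hm.sum_X_mul_pderiv, smul_mul_assoc, map_nsmul, nsmul_eq_mul]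
    rw [mul_left_comm, this, Finset.mul_sum]
    simp_rw [Jint_ibp hh hHg hH, pderiv_mul]
    rw [Finset.sum_neg_distrib, ← map_sum, Finset.sum_add_distrib, ← Finset.sum_mul, hP]
    simp
  have e2 : k * (2 * Jint h hh (P * G)) = - Jint H hHg (∑ i, pderiv i P * pderiv i G)
      - Jint H hHg (P * ∑ i, pderiv i (pderiv i G)) := by
    have : k * Jint h hh (P * G) = ∑ i, Jint h hh (X i * (P * pderiv i G)) := by
      rw [← map_sum]
      simp_rw [mul_left_comm (X _)]
      rw [← Finset.mul_sum, hG.sum_X_mul_pderiv, mul_smul_comm, map_nsmul, nsmul_eq_mul]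
    rw [mul_left_comm, this, Finset.mul_sum]
    simp_rw [Jint_ibp hh hHg hH, pderiv_mul]
    rw [Finset.sum_neg_distrib, ← map_sum, Finset.sum_add_distrib, ← Finset.mul_sum, map_add]
    ring
  have e3 : Jint H hHg (P * ∑ i, pderiv i (pderiv i G)) = 0 := by
    obtain rfl | hk := Nat.eq_zero_or_pos k
    · have : G = C (coeff 0 G) := by
        rw [← homogeneousComponent_zero, homogeneousComponent_eq_self hG]
      rw [this]; simp
    · refine ih (k - 1 - 1) (by omega) _ ?_ (by omega) H hHg
      exact IsHomogeneous.sum _ _ _ fun i _ => hG.pderiv.pderiv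
  rw [e3] at e2
  have e4 : ((m : ℝ) - k) * Jint h hh (P * G) = 0 := by linarith
  have : ((m : ℝ) - k) ≠ 0 := by
    have : (k : ℝ) < m := by exact_mod_cast hkm
    linarith
  exact (mul_eq_zero.1 e4).resolve_left this

/-! ### Top homogeneous components -/

open MvPolynomial in
lemma hc_top_ne_zero {σ : Type*} (f : MvPolynomial σ ℝ) (hf : f ≠ 0) :
    homogeneousComponent f.totalDegree f ≠ 0 := by
  obtain ⟨d, hd, hd2⟩ := Finset.exists_mem_eq_sup f.support (support_nonempty.2 hf)
    (fun s => s.sum fun _ e => e)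
  intro h
  have h1 := congrArg (coeff d) h
  rw [coeff_homogeneousComponent, if_pos, coeff_zero] at h1
  · exact (mem_support_iff.1 hd) h1
  · rw [totalDegree, hd2]; rfl

open MvPolynomial in
lemma hc_mul_top {σ : Type*} (f g : MvPolynomial σ ℝ) :
    homogeneousComponent (f.totalDegree + g.totalDegree) (f * g) =
      homogeneousComponent f.totalDegree f * homogeneousComponent g.totalDegree g := by
  conv_lhs => rw [← sum_homogeneousComponent f, ← sum_homogeneousComponent g]
  rw [sum_homogeneousComponent f, sum_homogeneousComponent g]
  conv_lhs =>
    enter [2]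
    rw [← sum_homogeneousComponent f, ← sum_homogeneousComponent g]
  rw [Finset.sum_mul_sum, map_sum, Finset.sum_eq_single f.totalDegree]
  · rw [map_sum, Finset.sum_eq_single g.totalDegree]
    · exact homogeneousComponent_eq_self
        ((homogeneousComponent_isHomogeneous _ _).mul (homogeneousComponent_isHomogeneous _ _))
    · intro j hj hj2
      rw [homogeneousComponent_of_mem
        ((homogeneousComponent_isHomogeneous _ _).mul (homogeneousComponent_isHomogeneous _ _)),
        if_neg]
      omega
    · simp
  · intro i hi hi2
    rw [map_sum]
    refine Finset.sum_eq_zero fun j hj => ?_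
    rw [homogeneousComponent_of_mem
        ((homogeneousComponent_isHomogeneous _ _).mul (homogeneousComponent_isHomogeneous _ _)),
        if_neg]
    simp at hi hj
    omega
  · simp

open MvPolynomial in
lemma hom_eval_smul {σ : Type*} (f : MvPolynomial σ ℝ) (k : ℕ) (hf : f.IsHomogeneous k)
    (x : σ → ℝ) (t : ℝ) : eval (t • x) f = t ^ k * eval x f := by
  rw [eval_eq, eval_eq, Finset.mul_sum]
  refine Finset.sum_congr rfl fun d hd => ?_
  have h1 : ∑ i ∈ d.support, d i = k := by
    by_contra hne
    exact (mem_support_iff.1 hd) (hf.coeff_eq_zero hne)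
  simp only [Pi.smul_apply, smul_eq_mul, mul_pow, Finset.prod_mul_distrib]
  rw [Finset.prod_pow_eq_pow_sum, h1]
  ring

open MvPolynomial in
lemma hc_tendsto {σ : Type*} (f : MvPolynomial σ ℝ) (x : σ → ℝ) :
    Tendsto (fun t : ℝ => eval (t • x) f / t ^ f.totalDegree) atTop
      (nhds (eval x (homogeneousComponent f.totalDegree f))) := by
  have h1 : ∀ t : ℝ, eval (t • x) f = ∑ i ∈ Finset.range (f.totalDegree + 1),
      t ^ i * eval x (homogeneousComponent i f) := by
    intro t
    conv_lhs => rw [← sum_homogeneousComponent f, map_sum]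
    refine Finset.sum_congr rfl fun i _ => ?_
    exact hom_eval_smul _ _ (homogeneousComponent_isHomogeneous i f) x t
  have h2 : Tendsto (fun t : ℝ => ∑ i ∈ Finset.range f.totalDegree,
      (t ^ i / t ^ f.totalDegree) * eval x (homogeneousComponent i f)
      + eval x (homogeneousComponent f.totalDegree f)) atTop
      (nhds (∑ i ∈ Finset.range f.totalDegree, 0 * eval x (homogeneousComponent i f)
       + eval x (homogeneousComponent f.totalDegree f))) := by
    refine Tendsto.add (tendsto_finsetSum _ fun i hi => ?_) tendsto_const_nhds
    exact (tendsto_pow_div_pow_atTop_zero (Finset.mem_range.1 hi)).mul_const _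
  simp only [zero_mul, Finset.sum_const_zero, zero_add] at h2
  refine h2.congr' ?_
  filter_upwards [eventually_gt_atTop 0] with t ht
  rw [h1, Finset.sum_range_succ, add_div, Finset.sum_div]
  congr 1
  · refine Finset.sum_congr rfl fun i _ => by ring
  · field_simp

open MvPolynomial in
lemma hc_pderiv {σ : Type*} (f : MvPolynomial σ ℝ) (i : σ) (k : ℕ) :
    pderiv i (homogeneousComponent (k+1) f) = homogeneousComponent k (pderiv i f) := by
  ext d
  rw [coeff_pderiv, coeff_homogeneousComponent, coeff_homogeneousComponent, coeff_pderiv]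
  simp
  
open MvPolynomial in
lemma hc_harmonic {n : ℕ} (P : MvPolynomial (Fin n) ℝ) (hP : IsHarmonicPoly P) (m : ℕ) :
    IsHarmonicPoly (homogeneousComponent m P) := by
  unfold IsHarmonicPoly at *
  match m with
  | 0 => simp [homogeneousComponent_zero]
  | 1 => 
    refine Finset.sum_eq_zero fun i _ => ?_
    rw [hc_pderiv _ _ 0, homogeneousComponent_zero]; simp
  | k + 2 =>
    simp_rw [hc_pderiv]
    rw [← map_sum, hP, map_zero]

open MvPolynomial in
/-- Brelot-Choquet: a nonnegative factor of a harmonic polynomial is constant. -/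
lemma nonneg_factor {n : ℕ} (P f g : MvPolynomial (Fin n) ℝ) (hP0 : P ≠ 0)
    (hP : IsHarmonicPoly P) (hfg : P = f * g) (hf : ∀ x, 0 ≤ eval x f) :
    f.totalDegree = 0 := by
  by_contra hdeg
  have hf0 : f ≠ 0 := by rintro rfl; simp at hfg; exact hP0 hfg
  have hg0 : g ≠ 0 := by rintro rfl; simp at hfg; exact hP0 hfg
  set F := homogeneousComponent f.totalDegree f with hF
  set G := homogeneousComponent g.totalDegree g with hG
  have hFn : ∀ x, 0 ≤ eval x F := by
    intro x
    refine ge_of_tendsto (hc_tendsto f x) ?_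
    filter_upwards [eventually_gt_atTop 0] with t ht
    have := hf (t • x)
    positivity
  have hT : homogeneousComponent (f.totalDegree + g.totalDegree) P = F * G := by
    rw [hfg, hc_mul_top]
  have hharm : IsHarmonicPoly (F * G) := hT ▸ hc_harmonic P hP _
  have hhom : (F * G).IsHomogeneous (f.totalDegree + g.totalDegree) :=
    hT ▸ homogeneousComponent_isHomogeneous _ _
  have hgood : GoodK (fun s => Real.smoothTransition (1 - s)) := by
    constructor
    · exact Real.smoothTransition.contDiff.comp (contDiff_const.sub contDiff_id)
    · intro s hs; exact Real.smoothTransition.zero_of_nonpos (by linarith)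
  have hJ := Jint_orth (F * G) _ hharm hhom _ G (homogeneousComponent_isHomogeneous _ _)
    (by omega) _ hgood
  obtain ⟨x, hx, hx2⟩ := aux_dense (F * G)
    (mul_ne_zero (hc_top_ne_zero f hf0) (hc_top_ne_zero g hg0))
    {x : Fin n → ℝ | ‖(WithLp.toLp 2 x : EuclideanSpace ℝ (Fin n))‖ < 1}
    (isOpen_lt (by fun_prop) continuous_const) ⟨0, by simp⟩
  have hpos : 0 < Jint _ hgood (F * G * G) := by
    refine Continuous.integral_pos_of_hasCompactSupport_nonneg_nonzero
      (x := WithLp.toLp 2 x) ?_ ?_ ?_ ?_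
    · exact (polyFun_contDiff (k := 0) _).continuous.mul hgood.continuous_rad
    · exact hgood.compact_rad.mul_left
    · intro y
      have h1 : polyFun (F * G * G) y = eval (fun i => y i) F * (eval (fun i => y i) G) ^ 2 := by
        simp [polyFun]; ring
      simp only [Pi.zero_apply]
      rw [h1]
      exact mul_nonneg (mul_nonneg (hFn _) (sq_nonneg _)) (Real.smoothTransition.nonneg _)
    · refine mul_ne_zero ?_ ?_
      · simp only [polyFun]
        rw [map_mul] at hx2 ⊢
        rw [map_mul]
        exact mul_ne_zero hx2 (right_ne_zero_of_mul hx2)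
      · apply ne_of_gt
        apply Real.smoothTransition.pos_of_pos
        have h3 : ‖(WithLp.toLp 2 x : EuclideanSpace ℝ (Fin n))‖ < 1 := hx
        have h4 := norm_nonneg (WithLp.toLp 2 x : EuclideanSpace ℝ (Fin n))
        nlinarith
  linarith

open MvPolynomial in
/-- Division step. -/
lemma poly_dvd {n : ℕ} (P Q : MvPolynomial (Fin n) ℝ) (hP0 : P ≠ 0)
    (hP : IsHarmonicPoly P) (K : (Fin n → ℝ) → ℝ) (hK : Continuous K)
    (h : ∀ x, |eval x Q| ≤ K x * |eval x P|) : P ∣ Q := by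
  obtain ⟨p, q, D, hrel, hp, hq⟩ := UniqueFactorizationMonoid.exists_reduced_factors P hP0 Q
  have hD : D ≠ 0 := by rintro rfl; simp at hp; exact hP0 hp.symm
  have hp0 : p ≠ 0 := by rintro rfl; simp at hp; exact hP0 hp.symm
  have hle : ∀ x, |eval x q| ≤ K x * |eval x p| := by
    intro x
    by_contra! hx
    obtain ⟨y, hy, hy2⟩ := aux_dense D hD {x | K x * |eval x p| < |eval x q|}
      (isOpen_lt (hK.mul (MvPolynomial.continuous_eval p).abs)
        (MvPolynomial.continuous_eval q).abs) ⟨x, hx⟩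
    have h1 := h y
    rw [← hp, ← hq, map_mul, map_mul, abs_mul, abs_mul, mul_left_comm] at h1
    have h2 := le_of_mul_le_mul_left h1 (abs_pos.2 hy2)
    have h3 : K y * |eval y p| < |eval y q| := hy
    linarith
  by_cases hu : IsUnit p
  · rw [← hp, ← hq]
    exact mul_dvd_mul_left _ hu.dvd
  exfalso
  obtain ⟨f, hf, hfp⟩ := WfDvdMonoid.exists_irreducible_factor hu hp0
  obtain ⟨g, hg⟩ : f ∣ P := hfp.trans ⟨D, by rw [← hp, mul_comm]⟩
  have hdeg : f.totalDegree ≠ 0 := by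
    intro h0
    rw [totalDegree_eq_zero_iff_eq_C] at h0
    apply hf.not_isUnit
    rw [h0]
    refine IsUnit.map C (IsUnit.mk0 _ fun h1 => hf.ne_zero ?_)
    rw [h0, h1, map_zero]
  have hneg : ∃ x, eval x f < 0 := by
    by_contra! H
    exact hdeg (nonneg_factor P f g hP0 hP hg H)
  have hpos : ∃ x, 0 < eval x f := by
    by_contra! H
    have := nonneg_factor P (-f) (-g) hP0 hP (by rw [hg]; ring) (fun x => by simpa using H x)
    rw [totalDegree_neg] at this
    exact hdeg this
  obtain ⟨x, hx⟩ := hneg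
  obtain ⟨y, hy⟩ := hpos
  have hfq : f ∣ q := by
    refine aux_dvd n f q hf x y hx hy fun z hz => ?_
    have h1 := hle z
    obtain ⟨c, rfl⟩ := hfp
    rw [map_mul, hz] at h1
    simpa using h1
  exact hf.not_isUnit (hrel hfp hfq)

/-! ### Harmonic functions of polynomial growth -/

/-- Partial derivative. -/
noncomputable def pd {n : ℕ} (i : Fin n) (f : EuclideanSpace ℝ (Fin n) → ℝ)
    (x : EuclideanSpace ℝ (Fin n)) : ℝ := fderiv ℝ f x (EuclideanSpace.single i 1)

lemma fderiv_eq_sum_pd {n : ℕ} (f : EuclideanSpace ℝ (Fin n) → ℝ)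
    (x y : EuclideanSpace ℝ (Fin n)) : fderiv ℝ f x y = ∑ i, y i * pd i f x := by
  have h : y = ∑ i, y i • (EuclideanSpace.single i (1:ℝ) : EuclideanSpace ℝ (Fin n)) := by
    ext j
    simp [Finset.sum_apply, Pi.single_apply]
  conv_lhs => rw [h]
  simp [pd]

lemma pd_contDiff {n : ℕ} (i : Fin n) {f : EuclideanSpace ℝ (Fin n) → ℝ} {k m : WithTop ℕ∞}
    (hf : ContDiff ℝ k f) (h : m + 1 ≤ k) : ContDiff ℝ m (pd i f) :=
  (hf.fderiv_right h).clm_apply contDiff_const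

lemma pd_comm {n : ℕ} (i j : Fin n) {f : EuclideanSpace ℝ (Fin n) → ℝ}
    (hf : ContDiff ℝ 2 f) : pd i (pd j f) = pd j (pd i f) := by
  funext x
  have hd : DifferentiableAt ℝ (fderiv ℝ f) x :=
    (hf.fderiv_right (m := 1) (by norm_num)).differentiable one_ne_zero x
  have key : ∀ i j : Fin n, pd i (pd j f) x =
      fderiv ℝ (fderiv ℝ f) x (EuclideanSpace.single i 1) (EuclideanSpace.single j 1) := by
    intro i j
    have : HasFDerivAt (pd j f) ((fderiv ℝ (fderiv ℝ f) x).flip (EuclideanSpace.single j 1)) x := by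
      have := hd.hasFDerivAt.clm_apply (hasFDerivAt_const (EuclideanSpace.single j (1:ℝ)) x)
      rw [ContinuousLinearMap.comp_zero, zero_add] at this
      exact this
    rw [pd, this.fderiv]; rfl
  rw [key, key]
  have hs : IsSymmSndFDerivAt ℝ f x := hf.contDiffAt.isSymmSndFDerivAt (by simp)
  exact hs _ _

lemma pd_affine {n : ℕ} (i : Fin n) {f : EuclideanSpace ℝ (Fin n) → ℝ}
    (hf : Differentiable ℝ f) (x : EuclideanSpace ℝ (Fin n)) (R : ℝ)
    (y : EuclideanSpace ℝ (Fin n)) :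
    pd i (fun y => f (x + R • y)) y = R * pd i f (x + R • y) := by
  have h1 : HasFDerivAt (fun y : EuclideanSpace ℝ (Fin n) => x + R • y)
      (R • ContinuousLinearMap.id ℝ _) y :=
    ((hasFDerivAt_id y).const_smul R).const_add x
  have h2 := (hf (x + R • y)).hasFDerivAt.comp y h1
  have h3 : HasFDerivAt (fun y => f (x + R • y)) _ y := h2
  rw [pd, h3.fderiv]
  simp [pd]

lemma mean_deriv {n : ℕ} {v : EuclideanSpace ℝ (Fin n) → ℝ} (hv : ContDiff ℝ 1 v)
    {h : ℝ → ℝ} (hh : GoodK h) (x : EuclideanSpace ℝ (Fin n)) (R : ℝ) :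
    HasDerivAt (fun R : ℝ => ∫ y, v (x + R • y) * rad h y)
      (∫ y, fderiv ℝ v (x + R • y) y * rad h y) R := by
  have hfc := hv.continuous_fderiv one_ne_zero
  have hc2 : Continuous fun p : ℝ × EuclideanSpace ℝ (Fin n) =>
      fderiv ℝ v (x + p.1 • p.2) p.2 :=
    (hfc.comp (by fun_prop)).clm_apply continuous_snd
  obtain ⟨M, hM⟩ := ((isCompact_closedBall R 1).prod
    (isCompact_closedBall (0 : EuclideanSpace ℝ (Fin n)) 1)).exists_bound_of_continuousOn
    hc2.continuousOn
  have hcv : ∀ r : ℝ, Continuous fun y => v (x + r • y) := fun r =>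
    hv.continuous.comp (by fun_prop)
  have hcf : ∀ r : ℝ, Continuous fun y => fderiv ℝ v (x + r • y) y := fun r =>
    hc2.comp (by fun_prop : Continuous fun y : EuclideanSpace ℝ (Fin n) => (r, y))
  refine (hasDerivAt_integral_of_dominated_loc_of_deriv_le (s := Metric.ball R 1)
    (F' := fun r y => fderiv ℝ v (x + r • y) y * rad h y)
    (bound := fun y => M * |rad h y|) (Metric.ball_mem_nhds R one_pos) ?_ ?_ ?_ ?_ ?_ ?_).2
  · exact Eventually.of_forall fun r => (rad_integrable hh (hcv r)).aestronglyMeasurable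
  · exact rad_integrable hh (hcv R)
  · exact (rad_integrable hh (hcf R)).aestronglyMeasurable
  · refine Eventually.of_forall fun y r hr => ?_
    by_cases hy : 1 ≤ ‖y‖
    · simp [hh.rad_zero y hy]
    · rw [norm_mul, Real.norm_eq_abs (rad h y)]
      refine mul_le_mul_of_nonneg_right (hM (r, y) ⟨Metric.ball_subset_closedBall hr, ?_⟩)
        (abs_nonneg _)
      simp; linarith
  · have := (rad_integrable hh (n := n) (f := fun _ => 1) continuous_const).abs
    simpa using this.const_mul M
  · refine Eventually.of_forall fun y r hr => ?_
    have h1 : HasDerivAt (fun r : ℝ => x + r • y) y r := by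
      simpa using ((hasDerivAt_id r).smul_const y).const_add x
    have h2 := ((hv.differentiable one_ne_zero) (x + r • y)).hasFDerivAt.comp_hasDerivAt r h1
    exact h2.mul_const _

lemma mean_value {n : ℕ} {v : EuclideanSpace ℝ (Fin n) → ℝ} (hv : HarmonicFn v)
    {h : ℝ → ℝ} (hh : GoodK h) (x : EuclideanSpace ℝ (Fin n)) (R : ℝ) :
    ∫ y, v (x + R • y) * rad h y = v x * ∫ y : EuclideanSpace ℝ (Fin n), rad h y := by
  obtain ⟨H, hHg, hH⟩ := hh.anti
  have hv1 : ContDiff ℝ 1 v := hv.1.of_le (by norm_num)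
  have hp : ∀ i, ContDiff ℝ 1 (pd i v) := fun i => pd_contDiff i hv.1 (by norm_num)
  have haff : ∀ R : ℝ, ContDiff ℝ 1 fun y : EuclideanSpace ℝ (Fin n) => x + R • y := fun R =>
    contDiff_const.add (contDiff_id.const_smul R)
  have hz : ∀ R : ℝ, ∫ y, fderiv ℝ v (x + R • y) y * rad h y = 0 := by
    intro R
    simp_rw [fderiv_eq_sum_pd, Finset.sum_mul]
    rw [integral_finsetSum]
    · have h1 : ∀ i : Fin n, ∫ y : EuclideanSpace ℝ (Fin n), y i * pd i v (x + R • y) * rad h y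
          = - (1/2) * ∫ y, R * pd i (pd i v) (x + R • y) * rad H y := by
        intro i
        have h2 := rad_ibp hh hHg hH ((hp i).comp (haff R)) i
        have h3 : ∀ y, fderiv ℝ (pd i v ∘ fun y => x + R • y) y (EuclideanSpace.single i 1)
            = R * pd i (pd i v) (x + R • y) := fun y =>
          pd_affine i ((hp i).differentiable one_ne_zero) x R y
        simp_rw [h3] at h2
        simp only [Function.comp] at h2
        linarith
      simp_rw [h1]
      rw [← Finset.mul_sum, ← integral_finsetSum]
      · simp_rw [← Finset.sum_mul, ← Finset.mul_sum]
        have h4 : ∀ z, ∑ i, pd i (pd i v) z = 0 := fun z => hv.2 z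
        simp [h4]
      · intro i _
        refine rad_integrable hHg (continuous_const.mul ?_)
        exact (pd_contDiff (m := 0) i (hp i) (by norm_num)).continuous.comp (haff R).continuous
    · intro i _
      refine rad_integrable hh (Continuous.mul (by fun_prop) ?_)
      exact (hp i).continuous.comp (haff R).continuous
  have hd : ∀ R, HasDerivAt (fun R : ℝ => ∫ y, v (x + R • y) * rad h y) 0 R := by
    intro R
    have := mean_deriv hv1 hh x R
    rwa [hz] at this
  have hconst := is_const_of_deriv_eq_zero (fun R => (hd R).differentiableAt)
    (fun R => (hd R).deriv) R 0
  refine hconst.trans ?_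
  simp [integral_const_mul]

lemma exists_kernel (n : ℕ) : ∃ h : ℝ → ℝ, GoodK h ∧ GoodK (deriv h) ∧
    0 < ∫ y : EuclideanSpace ℝ (Fin n), rad h y := by
  have hgood : GoodK (fun s => Real.smoothTransition (1 - s)) := by
    constructor
    · exact Real.smoothTransition.contDiff.comp (contDiff_const.sub contDiff_id)
    · intro s hs; exact Real.smoothTransition.zero_of_nonpos (by linarith)
  refine ⟨_, hgood, ⟨(contDiff_infty_iff_deriv.1 hgood.1).2, fun s hs => ?_⟩, ?_⟩
  · refine IsLocalMin.deriv_eq_zero (Eventually.of_forall fun t => ?_)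
    simp only [hgood.2 s hs]
    exact Real.smoothTransition.nonneg _
  · refine Continuous.integral_pos_of_hasCompactSupport_nonneg_nonzero
      (x := 0) hgood.continuous_rad hgood.compact_rad ?_ ?_
    · intro y; exact Real.smoothTransition.nonneg _
    · simp [rad]

open scoped ContDiff in
lemma harmonic_smooth {n : ℕ} {v : EuclideanSpace ℝ (Fin n) → ℝ} (hv : HarmonicFn v) :
    ContDiff ℝ ∞ v := by
  obtain ⟨h, hh, -, hc⟩ := exists_kernel n
  have h1 : v = fun x => (∫ y : EuclideanSpace ℝ (Fin n), rad h y)⁻¹ *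
      (convolution (rad h) v (ContinuousLinearMap.mul ℝ ℝ) volume) x := by
    funext x
    rw [convolution_def]
    have := mean_value hv hh x (-1)
    simp only [ContinuousLinearMap.mul_apply']
    have h2 : ∫ t, rad h t * v (x - t) = ∫ y, v (x + (-1 : ℝ) • y) * rad h y := by
      congr 1; funext y; rw [mul_comm]; simp [sub_eq_add_neg]
    rw [h2, this]
    field_simp
  rw [h1]
  refine contDiff_const.mul ?_
  exact hh.compact_rad.contDiff_convolution_left _ (hh.contDiff_rad (k := ⊤))
    hv.1.continuous.locallyIntegrable

open scoped ContDiff in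
lemma harmonic_pd {n : ℕ} {v : EuclideanSpace ℝ (Fin n) → ℝ} (hv : HarmonicFn v) (i : Fin n) :
    HarmonicFn (pd i v) := by
  have hs := harmonic_smooth hv
  have hp : ∀ j, ContDiff ℝ ∞ (pd j v) := fun j => pd_contDiff j hs (by simp)
  have hpp : ∀ j, ContDiff ℝ ∞ (pd j (pd j v)) := fun j => pd_contDiff j (hp j) (by simp)
  have two : (2 : WithTop ℕ∞) ≤ ∞ := by
    exact WithTop.coe_le_coe.2 (le_top : (2 : ℕ∞) ≤ ⊤)
  refine ⟨(hp i).of_le two, fun x => ?_⟩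
  change ∑ j, pd j (pd j (pd i v)) x = 0
  have h1 : ∀ j, pd j (pd j (pd i v)) = pd i (pd j (pd j v)) := by
    intro j
    rw [pd_comm j i hv.1, pd_comm j i ((hp j).of_le two)]
  simp_rw [h1]
  have h2 : (fun y => ∑ j, pd j (pd j v) y) = fun _ => 0 := funext fun y => hv.2 y
  have h3 : HasFDerivAt (fun y => ∑ j, pd j (pd j v) y)
      (∑ j, fderiv ℝ (pd j (pd j v)) x) x :=
    HasFDerivAt.fun_sum fun j _ => ((hpp j).differentiable (by simp) x).hasFDerivAt
  rw [h2] at h3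
  have h4 := h3.unique (hasFDerivAt_const 0 x)
  have h5 := congrArg (fun L => L (EuclideanSpace.single i (1:ℝ))) h4
  simpa [pd] using h5

lemma gradient_bound {n : ℕ} (i : Fin n) : ∃ A : ℝ, 0 ≤ A ∧
    ∀ v : EuclideanSpace ℝ (Fin n) → ℝ, HarmonicFn v →
    ∀ x (R : ℝ) (B : ℝ), 0 < R → (∀ y, ‖y‖ ≤ 1 → |v (x + R • y)| ≤ B) →
      |pd i v x| ≤ A * B / R := by
  obtain ⟨h, hh, hh', hc⟩ := exists_kernel n
  set c := ∫ y : EuclideanSpace ℝ (Fin n), rad h y with hcdef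
  have hH : ∀ s, HasDerivAt h (deriv h s) s := fun s =>
    ((contDiff_infty_iff_deriv.1 hh.1).1 s).hasDerivAt
  have hint : Integrable (fun y : EuclideanSpace ℝ (Fin n) => |y i * rad (deriv h) y|) :=
    (rad_integrable hh' (f := fun y => y i) (by fun_prop)).abs
  set A0 := ∫ y : EuclideanSpace ℝ (Fin n), |y i * rad (deriv h) y| with hA0
  have hA0n : 0 ≤ A0 := integral_nonneg fun y => abs_nonneg _
  refine ⟨2 * A0 / c, by positivity, fun v hv x R B hR hB => ?_⟩
  have hv1 : ContDiff ℝ 1 v := hv.1.of_le (by norm_num)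
  have haff : ContDiff ℝ 1 fun y : EuclideanSpace ℝ (Fin n) => x + R • y :=
    contDiff_const.add (contDiff_id.const_smul R)
  have h1 := mean_value (harmonic_pd hv i) hh x R
  have h2 := rad_ibp hh' hh hH (hv1.comp haff) i
  have h3 : ∀ y, fderiv ℝ (v ∘ fun y => x + R • y) y (EuclideanSpace.single i 1)
            = R * pd i v (x + R • y) := fun y =>
          pd_affine i (hv1.differentiable one_ne_zero) x R y
  simp_rw [h3, mul_assoc R] at h2
  rw [integral_const_mul, h1] at h2
  simp only [Function.comp] at h2
  have h4 : |∫ y, y i * v (x + R • y) * rad (deriv h) y| ≤ A0 * B := by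
    rw [← Real.norm_eq_abs, hA0, ← integral_mul_const]
    refine norm_integral_le_of_norm_le (hint.mul_const B) (Eventually.of_forall fun y => ?_)
    by_cases hy : ‖y‖ ≤ 1
    · have : y i * v (x + R • y) * rad (deriv h) y = (y i * rad (deriv h) y) * v (x + R • y) := by
        ring
      rw [this, norm_mul, Real.norm_eq_abs, Real.norm_eq_abs]
      exact mul_le_mul_of_nonneg_left (hB y hy) (abs_nonneg _)
    · simp [hh'.rad_zero y (not_le.1 hy).le]
  have h5 : pd i v x = - (2 * ∫ y, y i * v (x + R • y) * rad (deriv h) y) / (c * R) := by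
    rw [h2, ← hcdef]; field_simp
  rw [h5, abs_div, abs_neg, abs_mul, abs_of_pos (mul_pos hc hR), abs_two]
  rw [show 2 * A0 / c * B / R = 2 * (A0 * B) / (c * R) by field_simp]
  gcongr

open MvPolynomial in
lemma poly_of_pd {n : ℕ} {v : EuclideanSpace ℝ (Fin n) → ℝ} (hv : Differentiable ℝ v)
    (Q : Fin n → MvPolynomial (Fin n) ℝ) (hQ : ∀ i x, pd i v x = polyFun (Q i) x) :
    ∃ S : MvPolynomial (Fin n) ℝ, ∀ x, v x = polyFun S x := by
  refine ⟨C (v 0) + ∑ i, X i * ∑ k ∈ Finset.range ((Q i).totalDegree + 1),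
    C ((k + 1 : ℝ)⁻¹) * homogeneousComponent k (Q i), fun x => ?_⟩
  have h1 : ∀ t : ℝ, HasDerivAt (fun t : ℝ => v (t • x)) (∑ i, x i * polyFun (Q i) (t • x)) t := by
    intro t
    have h1 : HasDerivAt (fun r : ℝ => r • x) x t := by
      simpa using ((hasDerivAt_id t).smul_const x)
    have h2 := (hv (t • x)).hasFDerivAt.comp_hasDerivAt t h1
    rw [fderiv_eq_sum_pd] at h2
    simp_rw [hQ] at h2
    exact h2
  have h2 : ∀ t : ℝ, HasDerivAt (fun t : ℝ => ∑ i, x i *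
      ∑ k ∈ Finset.range ((Q i).totalDegree + 1),
        (k + 1 : ℝ)⁻¹ * (t ^ (k + 1) * polyFun (homogeneousComponent k (Q i)) x))
      (∑ i, x i * polyFun (Q i) (t • x)) t := by
    intro t
    refine HasDerivAt.fun_sum fun i _ => HasDerivAt.const_mul _ ?_
    have h3 : polyFun (Q i) (t • x) = ∑ k ∈ Finset.range ((Q i).totalDegree + 1),
        t ^ k * polyFun (homogeneousComponent k (Q i)) x := by
      conv_lhs => rw [← sum_homogeneousComponent (Q i), polyFun, map_sum]
      refine Finset.sum_congr rfl fun k _ => ?_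
      exact hom_eval_smul _ _ (homogeneousComponent_isHomogeneous k (Q i)) (fun i => x i) t
    rw [h3]
    refine HasDerivAt.fun_sum fun k _ => ?_
    have h4 := (((hasDerivAt_pow (k+1) t).mul_const
      (polyFun (homogeneousComponent k (Q i)) x)).const_mul (k + 1 : ℝ)⁻¹)
    have hk : (k + 1 : ℝ) ≠ 0 := by positivity
    refine h4.congr_deriv ?_
    rw [Nat.add_sub_cancel, Nat.cast_add, Nat.cast_one, mul_assoc, inv_mul_cancel_left₀ hk]
  have h3 := is_const_of_deriv_eq_zero (fun t => ((h1 t).sub (h2 t)).differentiableAt)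
    (fun t => by rw [((h1 t).sub (h2 t)).deriv, sub_self]) 1 0
  simp at h3
  simp only [polyFun, map_add, map_sum, map_mul, eval_C, eval_X] at h3 ⊢
  linarith

lemma liouville_poly {n : ℕ} (N : ℕ) : ∀ v : EuclideanSpace ℝ (Fin n) → ℝ, HarmonicFn v →
    (∃ C : ℝ, ∀ x, |v x| ≤ C * (1 + ‖x‖) ^ N) →
    ∃ S : MvPolynomial (Fin n) ℝ, ∀ x, v x = polyFun S x := by
  induction N with
  | zero =>
    rintro v hv ⟨C, hC⟩
    refine poly_of_pd (hv.1.differentiable (by norm_num)) (fun _ => 0) (fun i x => ?_)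
    obtain ⟨A, hA, hb⟩ := gradient_bound i
    have h1 : ∀ R : ℝ, 0 < R → |pd i v x| ≤ A * C / R := fun R hR =>
      hb v hv x R C hR (fun y _ => by simpa using hC (x + R • y))
    have h2 : Tendsto (fun R : ℝ => A * C / R) atTop (nhds 0) :=
      tendsto_const_nhds.div_atTop tendsto_id
    have h3 : |pd i v x| ≤ 0 := ge_of_tendsto h2 (by
      filter_upwards [eventually_gt_atTop 0] with R hR using h1 R hR)
    simp only [polyFun, map_zero]
    simpa using h3
  | succ N ih =>
    rintro v hv ⟨C, hC⟩
    have hC0 : 0 ≤ C := by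
      have := (abs_nonneg _).trans (hC 0)
      simpa using this
    have : ∀ i, ∃ S : MvPolynomial (Fin n) ℝ, ∀ x, pd i v x = polyFun S x := by
      intro i
      refine ih _ (harmonic_pd hv i) ?_
      obtain ⟨A, hA, hb⟩ := gradient_bound i
      refine ⟨A * C * 2 ^ (N + 1), fun x => ?_⟩
      have hx : 0 < 1 + ‖x‖ := by positivity
      refine (hb v hv x (1 + ‖x‖) (C * (2 * (1 + ‖x‖)) ^ (N+1)) hx fun y hy => ?_).trans ?_
      · refine (hC _).trans ?_
        gcongr
        calc 1 + ‖x + (1 + ‖x‖) • y‖ ≤ 1 + (‖x‖ + (1 + ‖x‖) * ‖y‖) := by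
              gcongr
              refine (norm_add_le _ _).trans ?_
              rw [norm_smul, Real.norm_of_nonneg hx.le]
          _ ≤ 1 + (‖x‖ + (1 + ‖x‖) * 1) := by gcongr
          _ = 2 * (1 + ‖x‖) := by ring
      · apply le_of_eq
        rw [mul_pow, pow_succ (1 + ‖x‖)]
        field_simp
    choose S hS using this
    exact poly_of_pd (hv.1.differentiable (by norm_num)) S hS

lemma polyFun_bound {n : ℕ} (P : MvPolynomial (Fin n) ℝ) : ∃ (A : ℝ) (d : ℕ), 0 ≤ A ∧
    ∀ x, |polyFun P x| ≤ A * (1 + ‖x‖) ^ d := by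
  induction P using MvPolynomial.induction_on with
  | C a => exact ⟨|a|, 0, abs_nonneg _, fun x => by simp [polyFun]⟩
  | add p q hp hq =>
    obtain ⟨A, d, hA, h1⟩ := hp
    obtain ⟨B, e, hB, h2⟩ := hq
    refine ⟨A + B, d + e, by positivity, fun x => ?_⟩
    have hx : 1 ≤ 1 + ‖x‖ := by simp
    have : polyFun (p + q) x = polyFun p x + polyFun q x := by simp [polyFun]
    rw [this, add_mul]
    refine (abs_add_le _ _).trans (add_le_add ((h1 x).trans ?_) ((h2 x).trans ?_))
    · gcongr
      omega
    · gcongr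
      omega
  | mul_X p j hp =>
    obtain ⟨A, d, hA, h1⟩ := hp
    refine ⟨A, d + 1, hA, fun x => ?_⟩
    have : polyFun (p * MvPolynomial.X j) x = polyFun p x * x j := by simp [polyFun]
    rw [this, abs_mul, pow_succ, ← mul_assoc]
    have h2 : |x j| ≤ 1 + ‖x‖ := by
      have := PiLp.norm_apply_le x j
      rw [Real.norm_eq_abs] at this
      linarith
    exact mul_le_mul (h1 x) h2 (abs_nonneg _) (by positivity)

open MvPolynomial in
lemma degree_le {n : ℕ} (R : MvPolynomial (Fin n) ℝ) (γ C : ℝ) (hγ : 0 ≤ γ) (hC : 0 < C)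
    (h : ∀ x, |polyFun R x| ≤ C * (1 + ‖x‖) ^ γ) : R.totalDegree ≤ ⌊γ⌋₊ := by
  by_cases hR : R = 0
  · simp [hR]
  apply Nat.le_floor
  by_contra! hlt
  obtain ⟨x, -, hx⟩ := aux_dense _ (hc_top_ne_zero R hR) Set.univ isOpen_univ ⟨0, trivial⟩
  have h1 := (hc_tendsto R x).abs
  set y : EuclideanSpace ℝ (Fin n) := WithLp.toLp 2 x
  have h2 : Tendsto (fun t : ℝ => C * (1 + ‖y‖) ^ γ * t ^ (-(R.totalDegree - γ))) atTop
      (nhds (C * (1 + ‖y‖) ^ γ * 0)) :=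
    (tendsto_rpow_neg_atTop (by linarith)).const_mul _
  rw [mul_zero] at h2
  have h3 : |eval x (homogeneousComponent R.totalDegree R)| ≤ 0 := by
    refine le_of_tendsto_of_tendsto h1 h2 ?_
    filter_upwards [eventually_ge_atTop 1] with t ht
    have ht0 : 0 < t := by linarith
    have h4 : |eval (t • x) R| ≤ C * (1 + ‖t • y‖) ^ γ := h (t • y)
    have h5 : (1 + ‖t • y‖) ^ γ ≤ (t * (1 + ‖y‖)) ^ γ := by
      refine Real.rpow_le_rpow (by positivity) ?_ hγ
      rw [norm_smul, Real.norm_of_nonneg ht0.le]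
      linarith
    rw [Real.mul_rpow ht0.le (by positivity)] at h5
    rw [abs_div, abs_of_pos (pow_pos ht0 _), div_le_iff₀ (pow_pos ht0 _)]
    have h6 : t ^ (-(R.totalDegree - γ)) * t ^ R.totalDegree = t ^ γ := by
      rw [← Real.rpow_natCast, ← Real.rpow_add ht0]; congr 1; ring
    calc _ ≤ C * (t ^ γ * (1 + ‖y‖) ^ γ) := h4.trans (by gcongr)
      _ = _ := by rw [mul_assoc, h6]; ring
  exact hx (by simpa using h3)

/-- **Liouville theorem for the ratio of harmonic functions sharing zero sets**
(Theorem 1.2). If `u` is a nonzero harmonic polynomial on ℝⁿ (`n ≥ 2`), `v` is entire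
harmonic with `Z(u) ⊆ Z(v)`, and `|v/u|(x) ≤ C(1+|x|)^γ`, then `v/u` is a polynomial of
degree at most `⌊γ⌋`. -/
theorem liouville_ratio_harmonic (n : ℕ) (hn : 2 ≤ n)
    (P : MvPolynomial (Fin n) ℝ) (hP0 : P ≠ 0) (hP : IsHarmonicPoly P)
    (v : EuclideanSpace ℝ (Fin n) → ℝ) (hv : HarmonicFn v)
    (hZ : ∀ x, polyFun P x = 0 → v x = 0)
    (γ C : ℝ) (hγ : 0 ≤ γ) (hC : 0 < C)
    (hgrowth : ∀ x, |v x| ≤ C * (1 + ‖x‖) ^ γ * |polyFun P x|) :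
    ∃ R : MvPolynomial (Fin n) ℝ, R.totalDegree ≤ ⌊γ⌋₊ ∧
      ∀ x, v x = polyFun P x * polyFun R x := by
  obtain ⟨A, d, hA, hPb⟩ := polyFun_bound P
  obtain ⟨Q, hQ⟩ := liouville_poly (⌈γ⌉₊ + d) v hv ⟨C * A, fun x => by
    refine (hgrowth x).trans ?_
    have hx : 1 ≤ 1 + ‖x‖ := by simp
    have h1 : (1 + ‖x‖) ^ γ ≤ (1 + ‖x‖) ^ ⌈γ⌉₊ := by
      rw [← Real.rpow_natCast]
      exact Real.rpow_le_rpow_of_exponent_le hx (Nat.le_ceil γ)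
    calc _ ≤ C * (1 + ‖x‖) ^ ⌈γ⌉₊ * (A * (1 + ‖x‖) ^ d) := by
            gcongr
            exact hPb x
      _ = _ := by rw [pow_add]; ring⟩
  have hKc : Continuous fun x : Fin n → ℝ =>
      C * (1 + ‖(WithLp.toLp 2 x : EuclideanSpace ℝ (Fin n))‖) ^ γ := by
    refine continuous_const.mul (Continuous.rpow_const (by fun_prop) (fun x => Or.inr hγ))
  obtain ⟨R, hR⟩ := poly_dvd P Q hP0 hP _ hKc (fun x => by
    have := hgrowth (WithLp.toLp 2 x)
    rw [hQ] at this
    exact this)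
  have hvR : ∀ x, v x = polyFun P x * polyFun R x := by
    intro x
    rw [hQ, hR]; simp [polyFun]
  refine ⟨R, degree_le R γ C hγ hC fun x => ?_, hvR⟩
  by_contra! hx
  obtain ⟨y, hy, hy2⟩ := aux_dense P hP0
    {y : Fin n → ℝ | C * (1 + ‖(WithLp.toLp 2 y : EuclideanSpace ℝ (Fin n))‖) ^ γ
      < |MvPolynomial.eval y R|}
    (isOpen_lt hKc (MvPolynomial.continuous_eval R).abs) ⟨fun i => x i, hx⟩
  have h1 := hgrowth (WithLp.toLp 2 y)
  rw [hvR, abs_mul, mul_comm] at h1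
  have h2 : |MvPolynomial.eval y R| ≤
      C * (1 + ‖(WithLp.toLp 2 y : EuclideanSpace ℝ (Fin n))‖) ^ γ :=
    le_of_mul_le_mul_right h1 (abs_pos.2 hy2)
  exact absurd hy (not_lt.2 h2)
end

section
/- Let Q ∈ ℝ[x₁,…,x_n] be a harmonic polynomial and let P ∈ ℝ[x₁,…,x_n] be any polynomial such that every real zero of Q is a zero of P, i.e. {x ∈ ℝⁿ : Q(x) = 0} ⊆ {x ∈ ℝⁿ : P(x) = 0}. Then there exists a polynomial R ∈ ℝ[x₁,…,x_n] such that P = Q·R. -/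
open MeasureTheory Metric Filter

namespace Murdoch
open MvPolynomial

/-- Translation homomorphism `h(y) ↦ h(y + t v)`. -/
noncomputable def tau {n : ℕ} (v : Fin n → ℝ) :
    MvPolynomial (Fin n) ℝ →ₐ[ℝ] Polynomial (MvPolynomial (Fin n) ℝ) :=
  MvPolynomial.aeval fun i => Polynomial.C (X i) + Polynomial.C (C (v i)) * Polynomial.X

/-- Its extension to polynomials in `t`. -/
noncomputable def phi {n : ℕ} (v : Fin n → ℝ) :
    Polynomial (MvPolynomial (Fin n) ℝ) →+* Polynomial (MvPolynomial (Fin n) ℝ) :=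
  Polynomial.eval₂RingHom (tau v).toRingHom Polynomial.X

lemma phi_comp {n : ℕ} (v : Fin n → ℝ) : (phi (-v)).comp (phi v) = RingHom.id _ := by
  apply Polynomial.ringHom_ext'
  · apply MvPolynomial.ringHom_ext
    · intro r
      simp [phi, tau]
    · intro i
      simp [phi, tau]
      ring
  · simp [phi]

lemma phi_C {n : ℕ} (v : Fin n → ℝ) (f : MvPolynomial (Fin n) ℝ) :
    phi v (Polynomial.C f) = tau v f := by simp [phi]

noncomputable def phiEquiv {n : ℕ} (v : Fin n → ℝ) :
    Polynomial (MvPolynomial (Fin n) ℝ) ≃+* Polynomial (MvPolynomial (Fin n) ℝ) :=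
  RingEquiv.ofRingHom (phi v) (phi (-v)) (by simpa using phi_comp (-v)) (phi_comp v)

lemma eval_tau {n : ℕ} (v y : Fin n → ℝ) (t : ℝ) (f : MvPolynomial (Fin n) ℝ) :
    ((tau v f).map (eval y)).eval t = eval (y + t • v) f := by
  induction f using MvPolynomial.induction_on with
  | C a => simp [tau, Polynomial.algebraMap_apply]
  | add p q hp hq => simp [hp, hq]
  | mul_X p i hp =>
    rw [map_mul, Polynomial.map_mul, Polynomial.eval_mul, hp, map_mul]
    simp [tau]
    left; ring

/-- An irreducible polynomial changing sign divides every polynomial vanishing on its zeros. -/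
lemma dvd_of_sign_change {n : ℕ} (f P : MvPolynomial (Fin n) ℝ) (hf : Irreducible f)
    (p q : Fin n → ℝ) (hp : eval p f < 0) (hq : 0 < eval q f)
    (hZ : ∀ x, eval x f = 0 → eval x P = 0) : f ∣ P := by
  classical
  by_contra hnd
  set v := q - p with hv
  set F := tau v f with hF
  set G := tau v P with hG
  have hFirr : Irreducible F := by
    have h1 : Irreducible (Polynomial.C f) :=
      (Polynomial.prime_C_iff.2 hf.prime).irreducible
    have h2 := (MulEquiv.irreducible_iff (phiEquiv v)).2 h1
    have h3 : phiEquiv v (Polynomial.C f) = F := phi_C v f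
    rwa [h3] at h2
  have hFG : ¬ F ∣ G := by
    rintro ⟨R, hR⟩
    have h1 : phi (-v) F * phi (-v) R = phi (-v) G := by rw [hR, map_mul]
    have h2 : ∀ h, phi (-v) (tau v h) = Polynomial.C h := by
      intro h
      rw [← phi_C]
      exact congrArg (fun g => g (Polynomial.C h)) (phi_comp v)
    rw [hF, hG, h2, h2] at h1
    apply hnd
    refine ⟨(phi (-v) R).coeff 0, ?_⟩
    have := congrArg (fun g => Polynomial.coeff g 0) h1
    simpa using this.symm
  have hdeg : F.natDegree ≠ 0 := by
    intro h
    rw [Polynomial.natDegree_eq_zero] at h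
    obtain ⟨c, hc⟩ := h
    have h0 := eval_tau v p 0 f
    have h1 := eval_tau v p 1 f
    rw [← hF, ← hc] at h0 h1
    simp [hv] at h0 h1
    linarith
  have hprim := hFirr.isPrimitive hdeg
  let K := FractionRing (MvPolynomial (Fin n) ℝ)
  let _ : NormalizedGCDMonoid (MvPolynomial (Fin n) ℝ) :=
    Classical.choice inferInstance
  have hKirr := (hprim.irreducible_iff_irreducible_map_fraction_map (K := K)).1 hFirr
  have hKnd : ¬ F.map (algebraMap _ K) ∣ G.map (algebraMap _ K) := fun h =>
    hFG (hprim.dvd_of_fraction_map_dvd_fraction_map h)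
  obtain ⟨a, b, hab⟩ := (hKirr.coprime_iff_not_dvd).2 hKnd
  obtain ⟨b1, hb1, ha'⟩ := IsLocalization.integerNormalization_spec
    (nonZeroDivisors (MvPolynomial (Fin n) ℝ)) a
  obtain ⟨b2, hb2, hb'⟩ := IsLocalization.integerNormalization_spec
    (nonZeroDivisors (MvPolynomial (Fin n) ℝ)) b
  set a' := IsLocalization.integerNormalization
    (nonZeroDivisors (MvPolynomial (Fin n) ℝ)) a
  set b' := IsLocalization.integerNormalization
    (nonZeroDivisors (MvPolynomial (Fin n) ℝ)) b
  have key : Polynomial.C b2 * a' * F + Polynomial.C b1 * b' * G = Polynomial.C (b1 * b2) := by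
    apply Polynomial.map_injective (algebraMap _ K) (IsFractionRing.injective _ _)
    simp only [Polynomial.map_add, Polynomial.map_mul, ha', hb', Polynomial.map_C, map_mul]
    rw [Algebra.smul_def, Algebra.smul_def]
    have e : ∀ r : MvPolynomial (Fin n) ℝ, algebraMap (MvPolynomial (Fin n) ℝ) (Polynomial K) r
      = Polynomial.C (algebraMap _ K r) := fun r => rfl
    rw [e, e]
    linear_combination (Polynomial.C (algebraMap _ K b1) * Polynomial.C (algebraMap _ K b2)) * hab
  have hc0 : b1 * b2 ≠ 0 := mul_ne_zero (nonZeroDivisors.ne_zero hb1) (nonZeroDivisors.ne_zero hb2)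
  apply hc0
  -- the open set
  have hU : IsOpen {y : Fin n → ℝ | eval y f < 0 ∧ 0 < eval (y + v) f} := by
    apply IsOpen.inter
    · exact isOpen_lt (MvPolynomial.continuous_eval f) continuous_const
    · exact isOpen_lt continuous_const
        ((MvPolynomial.continuous_eval f).comp (continuous_id.add continuous_const))
  have hpU : p ∈ {y : Fin n → ℝ | eval y f < 0 ∧ 0 < eval (y + v) f} := by
    refine ⟨hp, ?_⟩
    simpa [hv] using hq
  obtain ⟨ε, hε, hball⟩ := Metric.isOpen_iff.1 hU p hpU
  have hzero : ∀ y ∈ Metric.ball p ε, eval y (b1 * b2) = 0 := by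
    intro y hy
    obtain ⟨hy1, hy2⟩ := hball hy
    have hcont : Continuous fun t : ℝ => eval (y + t • v) f :=
      (MvPolynomial.continuous_eval f).comp
        (continuous_const.add (continuous_id.smul continuous_const))
    obtain ⟨t, -, ht⟩ := intermediate_value_Icc (zero_le_one' ℝ) hcont.continuousOn
      (show (0:ℝ) ∈ Set.Icc _ _ by
        simp only [zero_smul, add_zero, one_smul]; exact ⟨hy1.le, hy2.le⟩)
    have h1 := hZ _ ht
    have h2 := congrArg (fun g => (Polynomial.map (eval y) g).eval t) key
    simp only [Polynomial.map_add, Polynomial.map_mul, Polynomial.eval_add, Polynomial.eval_mul,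
      hF, hG, eval_tau, Polynomial.map_C, Polynomial.eval_C] at h2
    simp only at ht
    rw [ht, h1] at h2
    simpa using h2.symm
  apply MvPolynomial.funext_set (fun i => Metric.ball (p i) ε)
  · intro i
    rw [Real.ball_eq_Ioo]
    exact Set.Ioo_infinite (by linarith)
  · intro x hx
    rw [← ball_pi _ hε] at hx
    rw [hzero x hx, map_zero]

end Murdoch

namespace Murdoch
open MvPolynomial ProbabilityTheory

lemma hc_mul {n : ℕ} (f g : MvPolynomial (Fin n) ℝ) (a b : ℕ) (ha : f.totalDegree ≤ a)
    (hb : g.totalDegree ≤ b) :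
    homogeneousComponent (a + b) (f * g) = homogeneousComponent a f * homogeneousComponent b g := by
  classical
  ext d
  have hz : ∀ (h : MvPolynomial (Fin n) ℝ) (k : ℕ) (e : Fin n →₀ ℕ), h.totalDegree ≤ k →
      k < e.degree → coeff e h = 0 := by
    intro h k e hk he
    apply coeff_eq_zero_of_totalDegree_lt
    exact lt_of_le_of_lt hk he
  rw [coeff_homogeneousComponent, coeff_mul, coeff_mul]
  split_ifs with hd
  · apply Finset.sum_congr rfl
    rintro ⟨x, y⟩ hxy
    rw [Finset.HasAntidiagonal.mem_antidiagonal] at hxy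
    simp only at hxy
    have hdeg : x.degree + y.degree = a + b := by rw [← hd, ← hxy, map_add]
    simp only [coeff_homogeneousComponent]
    rcases lt_trichotomy x.degree a with h | h | h
    · rw [hz g b y hb (by omega)]; simp
    · rw [if_pos h, if_pos (by omega)]
    · rw [hz f a x ha h]; simp
  · symm
    apply Finset.sum_eq_zero
    rintro ⟨x, y⟩ hxy
    rw [Finset.HasAntidiagonal.mem_antidiagonal] at hxy
    simp only at hxy
    have hdeg : x.degree + y.degree ≠ a + b := by rw [← map_add, hxy]; exact hd
    simp only [coeff_homogeneousComponent]
    by_cases h : x.degree = a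
    · rw [if_neg (show ¬ y.degree = b by omega), mul_zero]
    · rw [if_neg h, zero_mul]

lemma hc_top_ne_zero {n : ℕ} (f : MvPolynomial (Fin n) ℝ) (hf : f ≠ 0) :
    homogeneousComponent f.totalDegree f ≠ 0 := by
  obtain ⟨d, hd, hd'⟩ := Finset.exists_mem_eq_sup f.support (support_nonempty.2 hf) (fun s => s.degree)
  intro h
  have h1 := congrArg (coeff d) h
  rw [coeff_homogeneousComponent, if_pos, coeff_zero] at h1
  · exact (mem_support_iff.1 hd) h1
  · rw [← hd']; rfl

lemma hc_harmonic {n : ℕ} (Q : MvPolynomial (Fin n) ℝ) (hQ : ∑ i, pderiv i (pderiv i Q) = 0)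
    (m : ℕ) : ∑ i, pderiv i (pderiv i (homogeneousComponent m Q)) = 0 := by
  classical
  ext d
  have h := congrArg (coeff d) hQ
  simp only [coeff_sum, coeff_pderiv, coeff_homogeneousComponent, coeff_zero] at h ⊢
  by_cases hd : d.degree + 2 = m
  · rw [← h]
    apply Finset.sum_congr rfl
    intro i _
    rw [if_pos]
    simp [hd, add_assoc]
  · apply Finset.sum_eq_zero
    intro i _
    rw [if_neg]
    · simp
    · simpa [add_assoc] using hd

lemma eval_smul_homog {n : ℕ} (h : MvPolynomial (Fin n) ℝ) (k : ℕ) (hk : h.IsHomogeneous k)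
    (t : ℝ) (x : Fin n → ℝ) : eval (t • x) h = t ^ k * eval x h := by
  rw [eval_eq, eval_eq, Finset.mul_sum]
  apply Finset.sum_congr rfl
  intro d hd
  have hdeg : d.degree = k := by
    by_contra hne
    exact (mem_support_iff.1 hd) (hk.coeff_eq_zero hne)
  have : ∏ i ∈ d.support, (t • x) i ^ d i = t ^ k * ∏ i ∈ d.support, x i ^ d i := by
    simp only [Pi.smul_apply, smul_eq_mul, mul_pow, Finset.prod_mul_distrib]
    rw [Finset.prod_pow_eq_pow_sum, ← hdeg]; rfl
  rw [this]; ring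

lemma hc_top_nonneg {n : ℕ} (f : MvPolynomial (Fin n) ℝ) (hf : ∀ x, 0 ≤ eval x f)
    (x : Fin n → ℝ) : 0 ≤ eval x (homogeneousComponent f.totalDegree f) := by
  set d := f.totalDegree with hd
  let u : ℝ → ℝ := fun s => ∑ i ∈ Finset.range (d + 1), eval x (homogeneousComponent i f) * s ^ (d - i)
  have hu : Continuous u := by fun_prop
  have hu0 : u 0 = eval x (homogeneousComponent d f) := by
    simp only [u]
    rw [Finset.sum_range_succ, Finset.sum_eq_zero]
    · simp
    · intro i hi
      have := Finset.mem_range.1 hi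
      rw [zero_pow (by omega), mul_zero]
  rw [← hu0]
  have hpos : ∀ s : ℝ, 0 < s → 0 ≤ u s := by
    intro s hs
    have : u s = s ^ d * eval (s⁻¹ • x) f := by
      conv_rhs => rw [← sum_homogeneousComponent f]
      rw [map_sum, Finset.mul_sum]
      apply Finset.sum_congr rfl
      intro i hi
      have := Finset.mem_range.1 hi
      rw [eval_smul_homog _ i (homogeneousComponent_isHomogeneous i f)]
      have h2 : s ^ d = s ^ (d - i) * s ^ i := by rw [← pow_add]; congr 1; omega
      rw [h2, inv_pow]
      field_simp
    rw [this]
    exact mul_nonneg (pow_nonneg hs.le _) (hf _)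
  have ht : Tendsto u (nhdsWithin 0 (Set.Ioi 0)) (nhds (u 0)) :=
    hu.continuousAt.tendsto.mono_left nhdsWithin_le_nhds
  exact ge_of_tendsto ht (eventually_nhdsWithin_of_forall hpos)

/-- The standard Gaussian measure on `ℝⁿ`. -/
noncomputable def gam (n : ℕ) : Measure (Fin n → ℝ) := Measure.pi fun _ => gaussianReal 0 1

lemma integrable_pow_gauss (k : ℕ) : Integrable (fun x : ℝ => x ^ k) (gaussianReal 0 1) := by
  have h := (memLp_id_gaussianReal' (μ := 0) (v := 1) (k : ENNReal) (by simp))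
  have := h.integrable_norm_pow'
  rw [← integrable_norm_iff (by fun_prop)]
  simpa using this

noncomputable def mom (k : ℕ) : ℝ := ∫ x, x ^ k ∂(gaussianReal 0 1)

lemma integrable_pow_pdf (k : ℕ) :
    Integrable (fun x : ℝ => x ^ k * gaussianPDFReal 0 1 x) := by
  have h := integrable_pow_gauss k
  rw [gaussianReal_of_var_ne_zero _ one_ne_zero, integrable_withDensity_iff
    (measurable_gaussianPDF _ _) (ae_of_all _ fun _ => gaussianPDF_lt_top)] at h
  simpa [toReal_gaussianPDF] using h

lemma mom_succ (k : ℕ) : mom (k + 1) = k * mom (k - 1) := by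
  unfold mom
  rw [integral_gaussianReal_eq_integral_smul one_ne_zero,
    integral_gaussianReal_eq_integral_smul one_ne_zero]
  have hv : ∀ x : ℝ, HasDerivAt (gaussianPDFReal 0 1) (-(x * gaussianPDFReal 0 1 x)) x := by
    intro x
    unfold gaussianPDFReal
    have h1 : HasDerivAt (fun x : ℝ => -(x - 0) ^ 2 / (2 * ((1 : NNReal) : ℝ))) (-x) x := by
      have := (((hasDerivAt_id x).pow 2).neg).div_const (2:ℝ)
      refine (this.congr_deriv (by simp; ring)).congr_of_eventuallyEq (Eventually.of_forall fun y => ?_)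
      simp
    have := (h1.exp).const_mul (√(2 * Real.pi * ((1 : NNReal) : ℝ)))⁻¹
    exact this.congr_deriv (by ring)
  have key := integral_mul_deriv_eq_deriv_mul_of_integrable
    (u := fun x : ℝ => x ^ k) (u' := fun x => (k : ℝ) * x ^ (k - 1))
    (v := gaussianPDFReal 0 1) (v' := fun x => -(x * gaussianPDFReal 0 1 x))
    (fun x _ => hasDerivAt_pow k x) (fun x _ => hv x)
    (by
      convert (integrable_pow_pdf (k + 1)).neg using 1
      ext x; simp [pow_succ]; ring)
    (by
      convert (integrable_pow_pdf (k - 1)).const_mul (k : ℝ) using 1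
      ext x; simp; ring)
    (integrable_pow_pdf k)
  have e1 : ∀ x : ℝ, gaussianPDFReal 0 1 x • x ^ (k + 1)
      = -(x ^ k * -(x * gaussianPDFReal 0 1 x)) := by
    intro x; simp only [smul_eq_mul]; ring
  simp_rw [e1]
  rw [integral_neg, key, neg_neg, ← integral_const_mul]
  congr 1; ext x; simp only [smul_eq_mul]; ring

instance (n : ℕ) : IsProbabilityMeasure (gam n) := by unfold gam; infer_instance

instance (n : ℕ) : (gam n).IsOpenPosMeasure := by
  have : (gaussianReal 0 1).IsOpenPosMeasure :=
    (gaussianReal_absolutelyContinuous' 0 one_ne_zero).isOpenPosMeasure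
  unfold gam; infer_instance

lemma eval_monomial_eq {n : ℕ} (s : Fin n →₀ ℕ) (c : ℝ) (x : Fin n → ℝ) :
    eval x (monomial s c) = c * ∏ i, x i ^ s i := by
  rw [eval_monomial, Finsupp.prod_fintype]
  simp

lemma integrable_eval {n : ℕ} (p : MvPolynomial (Fin n) ℝ) :
    Integrable (fun x => eval x p) (gam n) := by
  induction p using MvPolynomial.induction_on' with
  | monomial s c =>
    simp only [eval_monomial_eq]
    exact (Integrable.fintype_prod_dep (f := fun i (y : ℝ) => y ^ s i)
      fun i => integrable_pow_gauss _).const_mul c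
  | add p q hp hq => simp only [map_add]; exact hp.add hq

noncomputable def E (n : ℕ) : MvPolynomial (Fin n) ℝ →ₗ[ℝ] ℝ where
  toFun p := ∫ x, eval x p ∂(gam n)
  map_add' p q := by
    simp only [map_add]; exact integral_add (integrable_eval p) (integrable_eval q)
  map_smul' c p := by simp [integral_const_mul]

lemma E_monomial {n : ℕ} (s : Fin n →₀ ℕ) (c : ℝ) : E n (monomial s c) = c * ∏ i, mom (s i) := by
  change ∫ x, eval x (monomial s c) ∂(gam n) = _
  simp only [eval_monomial_eq]
  rw [integral_const_mul]
  congr 1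
  exact integral_fintype_prod_eq_prod (μ := fun _ => gaussianReal 0 1) (fun i (y : ℝ) => y ^ s i)

lemma E_parts {n : ℕ} (i : Fin n) (p : MvPolynomial (Fin n) ℝ) :
    E n (X i * p) = E n (pderiv i p) := by
  classical
  induction p using MvPolynomial.induction_on' with
  | monomial s c =>
    rw [pderiv_monomial, X, monomial_mul, E_monomial, E_monomial, one_mul,
      ← Finset.mul_prod_erase _ _ (Finset.mem_univ i),
      ← Finset.mul_prod_erase _ _ (Finset.mem_univ i)]
    have h1 : ∏ x ∈ Finset.univ.erase i, mom ((Finsupp.single i 1 + s : Fin n →₀ ℕ) x)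
        = ∏ x ∈ Finset.univ.erase i, mom (s x) := by
      apply Finset.prod_congr rfl
      intro j hj
      have := Finset.ne_of_mem_erase hj
      simp [this.symm]
    have h2 : ∏ x ∈ Finset.univ.erase i, mom ((s - Finsupp.single i 1 : Fin n →₀ ℕ) x)
        = ∏ x ∈ Finset.univ.erase i, mom (s x) := by
      apply Finset.prod_congr rfl
      intro j hj
      have := Finset.ne_of_mem_erase hj
      simp [this.symm]
    rw [h1, h2]
    have h3 : (Finsupp.single i 1 + s : Fin n →₀ ℕ) i = s i + 1 := by simp [add_comm]
    have h4 : (s - Finsupp.single i 1 : Fin n →₀ ℕ) i = s i - 1 := by simp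
    rw [h3, h4, mom_succ]
    ring
  | add p q hp hq => simp [mul_add, hp, hq]

lemma pderiv_swap {n : ℕ} (i j : Fin n) (p : MvPolynomial (Fin n) ℝ) :
    pderiv i (pderiv j p) = pderiv j (pderiv i p) := by
  classical
  ext d
  simp only [coeff_pderiv]
  by_cases h : i = j
  · rw [h]
  · have h' : j ≠ i := fun e => h e.symm
    rw [add_right_comm]
    simp [h, h']
    ring

lemma orth {n : ℕ} (m : ℕ) : ∀ (k : ℕ) (H g : MvPolynomial (Fin n) ℝ), H.IsHomogeneous m →
    ∑ i, pderiv i (pderiv i H) = 0 → g.IsHomogeneous k → k < m → E n (H * g) = 0 := by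
  induction m with
  | zero => intro k H g _ _ _ hk; omega
  | succ m ih =>
    intro k H g hH hΔ hg hk
    have h1 := hH.sum_X_mul_pderiv
    have h2 : ∀ i, E n (X i * pderiv i H * g) = E n (pderiv i (pderiv i H) * g) := by
      intro i
      rw [mul_assoc, E_parts, Derivation.leibniz, map_add, smul_eq_mul, smul_eq_mul,
        mul_comm g]
      have : E n (pderiv i H * pderiv i g) = 0 := by
        rcases Nat.eq_zero_or_pos k with rfl | hk0
        · have : g = C (coeff 0 g) := by
            rw [← totalDegree_eq_zero_iff_eq_C]
            exact Nat.le_zero.1 hg.totalDegree_le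
          rw [this]; simp
        · apply ih (k - 1) _ _ hH.pderiv _ hg.pderiv (by omega)
          have := congrArg (pderiv i) hΔ
          rw [map_sum, map_zero] at this
          rw [← this]
          apply Finset.sum_congr rfl
          intro j _
          rw [pderiv_swap i j, pderiv_swap i j]
      rw [this, zero_add]
    have h3 : ((m + 1 : ℕ) : ℝ) * E n (H * g) = 0 := by
      have : E n ((∑ i, X i * pderiv i H) * g) = ((m + 1 : ℕ) : ℝ) * E n (H * g) := by
        rw [h1, smul_mul_assoc, map_nsmul, nsmul_eq_mul]
      rw [← this, Finset.sum_mul, map_sum]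
      simp_rw [h2]
      rw [← map_sum, ← Finset.sum_mul, hΔ, zero_mul, map_zero]
    have h4 : ((m + 1 : ℕ) : ℝ) ≠ 0 := by positivity
    exact (mul_eq_zero.1 h3).resolve_left h4

/-- Brelot-Choquet: a nonzero harmonic polynomial has no nonconstant nonnegative factor. -/
lemma brelot_choquet {n : ℕ} (f g : MvPolynomial (Fin n) ℝ)
    (hQ : ∑ i, pderiv i (pderiv i (f * g)) = 0) (h0 : f * g ≠ 0)
    (hf : ∀ x, 0 ≤ eval x f) : f.totalDegree = 0 := by
  by_contra hdeg
  have hf0 : f ≠ 0 := left_ne_zero_of_mul h0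
  have hg0 : g ≠ 0 := right_ne_zero_of_mul h0
  set F := homogeneousComponent f.totalDegree f with hF
  set G := homogeneousComponent g.totalDegree g with hG
  have hFG : homogeneousComponent (f.totalDegree + g.totalDegree) (f * g) = F * G :=
    hc_mul f g _ _ le_rfl le_rfl
  have hF0 : F ≠ 0 := hc_top_ne_zero f hf0
  have hG0 : G ≠ 0 := hc_top_ne_zero g hg0
  have hE : E n (F * G * G) = 0 := by
    rw [← hFG]
    exact orth _ g.totalDegree _ _ (homogeneousComponent_isHomogeneous _ _) (hc_harmonic _ hQ _)
      (homogeneousComponent_isHomogeneous _ _) (by omega)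
  have hE' : ∫ x, eval x (F * G * G) ∂(gam n) = 0 := hE
  have hnn : ∀ x, 0 ≤ eval x (F * G * G) := by
    intro x
    rw [map_mul, map_mul, mul_assoc]
    exact mul_nonneg (hc_top_nonneg f hf x) (mul_self_nonneg _)
  rw [integral_eq_zero_iff_of_nonneg hnn (integrable_eval _)] at hE'
  have h5 : (fun x => eval x (F * G * G)) = fun _ => 0 :=
    (Continuous.ae_eq_iff_eq (gam n) (MvPolynomial.continuous_eval _) continuous_const).1 hE'
  have h6 : F * G * G = 0 := by
    apply MvPolynomial.funext
    intro x
    simpa using congrFun h5 x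
  exact mul_ne_zero (mul_ne_zero hF0 hG0) hG0 h6

lemma isUnit_of_totalDegree {n : ℕ} (f : MvPolynomial (Fin n) ℝ) (hf : f ≠ 0)
    (h : f.totalDegree = 0) : IsUnit f := by
  rw [totalDegree_eq_zero_iff_eq_C] at h
  rw [h] at hf ⊢
  apply IsUnit.map
  rw [isUnit_iff_ne_zero]
  intro hc
  rw [hc] at hf
  simp at hf

lemma dvd_of_primes {n : ℕ} (P Q : MvPolynomial (Fin n) ℝ) (hQ0 : Q ≠ 0)
    (h2 : ∀ p, Prime p → ¬ p * p ∣ Q) (h1 : ∀ p, Prime p → p ∣ Q → p ∣ P) : Q ∣ P := by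
  induction Q using UniqueFactorizationMonoid.induction_on_prime with
  | h₁ => exact absurd rfl hQ0
  | h₂ x hx => exact hx.dvd
  | h₃ a p ha hp ih =>
    obtain ⟨c, hc⟩ := ih ha (fun q hq h => h2 q hq (h.mul_left _))
      (fun q hq h => h1 q hq (h.mul_left _))
    have hpa : ¬ p ∣ a := fun h => h2 p hp (mul_dvd_mul_left p h)
    have hpP := h1 p hp (dvd_mul_right _ _)
    rw [hc] at hpP
    obtain ⟨d, hd⟩ := (hp.dvd_or_dvd hpP).resolve_left hpa
    exact ⟨d, by rw [hc, hd]; ring⟩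

end Murdoch

/-- **Murdoch's division lemma** (Lemma 5.4). If `Q` is a harmonic polynomial and every
real zero of `Q` is a zero of `P`, then `Q` divides `P`. -/
theorem murdoch_division_lemma (n : ℕ) (Q P : MvPolynomial (Fin n) ℝ)
    (hQ : IsHarmonicPoly Q)
    (hZ : {x : Fin n → ℝ | MvPolynomial.eval x Q = 0} ⊆
      {x : Fin n → ℝ | MvPolynomial.eval x P = 0}) :
    ∃ R : MvPolynomial (Fin n) ℝ, P = Q * R := by
  by_cases hQ0 : Q = 0
  · refine ⟨0, ?_⟩
    rw [mul_zero]
    apply MvPolynomial.funext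
    intro x
    rw [map_zero]
    apply hZ
    simp [hQ0]
  have hBC : ∀ f g, Q = f * g → (∀ x, 0 ≤ MvPolynomial.eval x f) → f.totalDegree = 0 := by
    intro f g h hf
    subst h
    exact Murdoch.brelot_choquet f g hQ hQ0 hf
  refine Murdoch.dvd_of_primes P Q hQ0 ?_ ?_
  · rintro p hp ⟨g, hg⟩
    have h1 := hBC _ _ hg (fun x => by rw [map_mul]; exact mul_self_nonneg _)
    have h2 := Murdoch.isUnit_of_totalDegree _ (mul_ne_zero hp.ne_zero hp.ne_zero) h1
    exact hp.not_isUnit (isUnit_of_mul_isUnit_left h2)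
  · rintro p hp ⟨g, hg⟩
    have hpz : ∀ x, MvPolynomial.eval x p = 0 → MvPolynomial.eval x P = 0 := by
      intro x hx
      apply hZ
      simp [hg, hx]
    by_cases hneg : ∃ x, MvPolynomial.eval x p < 0
    · by_cases hpos : ∃ x, 0 < MvPolynomial.eval x p
      · obtain ⟨a, ha⟩ := hneg
        obtain ⟨b, hb⟩ := hpos
        exact Murdoch.dvd_of_sign_change p P hp.irreducible a b ha hb hpz
      · push Not at hpos
        exfalso
        have h1 := hBC (-p) (-g) (by rw [hg]; ring) (fun x => by simpa using hpos x)
        have h2 := Murdoch.isUnit_of_totalDegree _ (neg_ne_zero.2 hp.ne_zero) h1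
        exact hp.not_isUnit (by simpa using h2)
    · push Not at hneg
      exact absurd (Murdoch.isUnit_of_totalDegree _ hp.ne_zero (hBC p g hg hneg)) hp.not_isUnit
end

section
/- Let u be an entire harmonic function on ℝ² such that the set {x ∈ ℝ² : u(x) ≠ 0} has at most k connected components (k ≥ 1). Then u is a polynomial function of degree at most k − 1. -/
open MeasureTheory Metric Filter

/-- The set of connected components of a subset `S` of a topological space. -/
def nodalComponents {X : Type*} [TopologicalSpace X] (S : Set X) : Set (Set X) :=
  {C | ∃ x ∈ S, connectedComponentIn S x = C}

open Set Topology in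
/-- A continuous function on a preconnected set whose exponential is constant is constant. -/
lemma NL_const_of_exp_const {K : Set ℂ} (hK : IsPreconnected K) {g : ℂ → ℂ}
    (hg : ContinuousOn g K) {c : ℂ} (hc : ∀ z ∈ K, Complex.exp (g z) = c)
    {x y : ℂ} (hx : x ∈ K) (hy : y ∈ K) : g x = g y := by
  have key : ∀ x ∈ K, ∀ y ∈ K, ∀ n : ℤ, g y = g x + n * (2 * Real.pi * Complex.I) → n ≤ 0 := by
    intro x hx y hy n hn
    by_contra hpos
    push Not at hpos
    have hφ : ContinuousOn (fun z => ((g z - g x).im / (2 * Real.pi))) K := by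
      apply ContinuousOn.div_const
      exact Complex.continuous_im.comp_continuousOn (hg.sub continuousOn_const)
    have hpi := Real.pi_pos
    have h1 : ((g y - g x).im / (2 * Real.pi)) = n := by
      rw [hn]
      simp
    have h2 := hK.intermediate_value hx hy hφ
    have h3 : (1/2 : ℝ) ∈ Icc ((g x - g x).im / (2 * Real.pi)) ((g y - g x).im / (2 * Real.pi)) := by
      rw [h1]
      have : (1:ℝ) ≤ n := by exact_mod_cast hpos
      constructor
      · simp
      · linarith
    obtain ⟨z, hz, hz2⟩ := h2 h3
    obtain ⟨m, hm⟩ := Complex.exp_eq_exp_iff_exists_int.1 ((hc z hz).trans (hc x hx).symm)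
    have h4 : ((g z - g x).im / (2 * Real.pi)) = m := by
      rw [hm]
      simp
    simp only at hz2
    rw [h4] at hz2
    have h5 : (2 * m : ℝ) = 1 := by linarith
    have h6 : 2 * m = 1 := by exact_mod_cast h5
    omega
  obtain ⟨n, hn⟩ := Complex.exp_eq_exp_iff_exists_int.1 ((hc y hy).trans (hc x hx).symm)
  have h1 := key x hx y hy n hn
  have h2 := key y hy x hx (-n) (by rw [hn]; push_cast; ring)
  have : n = 0 := by omega
  rw [hn, this]; simp

/-- The index function of an arc. -/
noncomputable def NL_g (σ σ' : ℝ → ℂ) (a b : ℝ) (z : ℂ) : ℂ :=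
  (∫ t in a..b, σ' t / (σ t - z)) - (Complex.log (1 - z / σ b) - Complex.log (1 - z / σ a))

lemma NL_re_pos {R : ℝ} {z w : ℂ} (hz : z ∈ ball (0:ℂ) R) (hw : R ≤ ‖w‖) :
    0 < (1 - z / w).re := by
  have h0 : ‖z‖ < R := by simpa using hz
  have hw0 : 0 < ‖w‖ := by linarith [norm_nonneg z]
  have h1 : ‖z / w‖ < 1 := by
    rw [norm_div, div_lt_one hw0]; linarith
  have h2 := Complex.re_le_norm (z / w)
  simp only [Complex.sub_re, Complex.one_re]
  linarith

open Set Topology in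
lemma NL_g_exp {σ σ' : ℝ → ℂ} (hσ : Continuous σ) (hσ' : Continuous σ') {a b R : ℝ} (hab : a ≤ b)
    (hd : ∀ t ∈ Ioo a b, HasDerivAt σ (σ' t) t) (ha : R ≤ ‖σ a‖) (hb : R ≤ ‖σ b‖)
    {z : ℂ} (hz : z ∈ ball (0:ℂ) R) (hzσ : ∀ t, σ t ≠ z) :
    Complex.exp (NL_g σ σ' a b z) = σ b / σ a := by
  have h0 : ‖z‖ < R := by simpa using hz
  have hR : 0 < R := by linarith [norm_nonneg z]
  have ha0 : σ a ≠ 0 := by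
    intro h; rw [h] at ha; simp at ha; linarith
  have hb0 : σ b ≠ 0 := by
    intro h; rw [h] at hb; simp at hb; linarith
  have hne : ∀ t, σ t - z ≠ 0 := fun t => sub_ne_zero.2 (hzσ t)
  have hcont : Continuous (fun t => σ' t / (σ t - z)) := hσ'.div (hσ.sub continuous_const) hne
  have hI : ∀ t, HasDerivAt (fun s => ∫ r in a..s, σ' r / (σ r - z)) (σ' t / (σ t - z)) t :=
    fun t => intervalIntegral.integral_hasDerivAt_right (hcont.intervalIntegrable _ _)
      hcont.stronglyMeasurable.stronglyMeasurableAtFilter hcont.continuousAt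
  have hIc : Continuous (fun s => ∫ r in a..s, σ' r / (σ r - z)) :=
    continuous_iff_continuousAt.2 fun t => (hI t).continuousAt
  have key := intervalIntegral.integral_eq_sub_of_hasDerivAt_of_le (a := a) (b := b)
    (f := fun s => (σ s - z) * Complex.exp (-(∫ r in a..s, σ' r / (σ r - z)))) (f' := fun _ => 0)
    hab (by fun_prop) (by
      intro t ht
      have h1 := ((hd t ht).sub_const z).mul ((hI t).neg.cexp)
      refine h1.congr_deriv ?_
      have h2 : (σ t - z) * (σ' t / (σ t - z)) = σ' t := mul_div_cancel₀ _ (hne t)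
      linear_combination -(Complex.exp (-(∫ r in a..t, σ' r / (σ r - z)))) * h2) (by simp)
  simp only [intervalIntegral.integral_zero, intervalIntegral.integral_same, neg_zero,
    Complex.exp_zero, mul_one] at key
  have key2 : (σ b - z) * Complex.exp (-(∫ r in a..b, σ' r / (σ r - z))) = σ a - z := by
    linear_combination -key
  have hpa := NL_re_pos hz ha
  have hpb := NL_re_pos hz hb
  have hna : (1 - z / σ a) ≠ 0 := by intro h; rw [h] at hpa; simp at hpa
  have hnb : (1 - z / σ b) ≠ 0 := by intro h; rw [h] at hpb; simp at hpb
  unfold NL_g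
  rw [Complex.exp_sub, Complex.exp_sub, Complex.exp_log hna, Complex.exp_log hnb]
  rw [Complex.exp_neg] at key2
  set E := Complex.exp (∫ r in a..b, σ' r / (σ r - z)) with hE
  have hE0 : E ≠ 0 := Complex.exp_ne_zero _
  have h3 : σ b - z = (σ a - z) * E := by
    rw [← key2]; field_simp
  have e1 : 1 - z / σ a = (σ a - z) / σ a := by field_simp
  have e2 : 1 - z / σ b = (σ b - z) / σ b := by field_simp
  rw [e1, e2, h3]
  have := hne a
  field_simp

open Set Topology in
lemma NL_g_const {σ σ' : ℝ → ℂ} (hσ : Continuous σ) (hσ' : Continuous σ') {a b R : ℝ} (hab : a ≤ b)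
    (hd : ∀ t ∈ Ioo a b, HasDerivAt σ (σ' t) t) (ha : R ≤ ‖σ a‖) (hb : R ≤ ‖σ b‖)
    {K : Set ℂ} (hK : IsPreconnected K) (hKR : K ⊆ ball (0:ℂ) R) (hKσ : ∀ z ∈ K, ∀ t, σ t ≠ z)
    {x y : ℂ} (hx : x ∈ K) (hy : y ∈ K) : NL_g σ σ' a b x = NL_g σ σ' a b y := by
  refine NL_const_of_exp_const hK ?_ (fun z hz => NL_g_exp hσ hσ' hab hd ha hb (hKR hz) (hKσ z hz))
    hx hy
  unfold NL_g
  apply ContinuousOn.sub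
  · rw [continuousOn_iff_continuous_domRestrict]
    have : Continuous (Function.uncurry fun (z : K) (t : ℝ) => σ' t / (σ t - (z : ℂ))) := by
      apply Continuous.div
      · fun_prop
      · fun_prop
      · rintro ⟨z, t⟩
        exact sub_ne_zero.2 (hKσ z z.2 t)
    exact intervalIntegral.continuous_parametric_intervalIntegral_of_continuous' this a b
  · apply ContinuousOn.sub
    · apply ContinuousOn.clog
      · fun_prop
      · intro z hz
        exact Or.inl (NL_re_pos (hKR hz) hb)
    · apply ContinuousOn.clog
      · fun_prop
      · intro z hz
        exact Or.inl (NL_re_pos (hKR hz) ha)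

lemma NL_log_div {x y : ℂ} (hx : 0 < x.re) (hy : 0 < y.re) :
    Complex.log (x / y) = Complex.log x - Complex.log y := by
  have hx0 : x ≠ 0 := by intro h; simp [h] at hx
  have hy0 : y ≠ 0 := by intro h; simp [h] at hy
  have h1 : Complex.exp (Complex.log x - Complex.log y) = x / y := by
    rw [Complex.exp_sub, Complex.exp_log hx0, Complex.exp_log hy0]
  have a1 := Complex.abs_arg_lt_pi_div_two_iff.2 (Or.inl hx)
  have a2 := Complex.abs_arg_lt_pi_div_two_iff.2 (Or.inl hy)
  rw [abs_lt] at a1 a2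
  rw [← h1, Complex.log_exp]
  · simp only [Complex.sub_im, Complex.log_im]; linarith
  · simp only [Complex.sub_im, Complex.log_im]; linarith

open Set Topology in
lemma NL_g_jump {σ σ' : ℝ → ℂ} (hσ : Continuous σ) (hσ' : Continuous σ') {a b c R : ℝ}
    (hac : a < c) (hcb : c < b)
    (hd : ∀ t ∈ Ioo a b, HasDerivAt σ (σ' t) t) (ha : R ≤ ‖σ a‖) (hb : R ≤ ‖σ b‖)
    {h : ℂ} (hh : h ≠ 0)
    (hp : σ c + h ∈ ball (0:ℂ) R) (hm : σ c - h ∈ ball (0:ℂ) R)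
    (hne1 : ∀ t, σ t ≠ σ c + h) (hne2 : ∀ t, σ t ≠ σ c - h)
    (hseg : ∀ t ∈ Icc a b, t ≠ c → ∀ w : ℝ, |w| ≤ 1 → σ t ≠ σ c + w * h)
    (him : 0 < (σ' c / h).im) :
    NL_g σ σ' a b (σ c + h) - NL_g σ σ' a b (σ c - h) = - (2 * Real.pi * Complex.I) := by
  have hab : a < b := hac.trans hcb
  have n1 : ∀ t, σ t - (σ c + h) ≠ 0 := fun t => sub_ne_zero.2 (hne1 t)
  have n2 : ∀ t, σ t - (σ c - h) ≠ 0 := fun t => sub_ne_zero.2 (hne2 t)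
  set F : ℝ → ℂ := fun t => (σ t - (σ c + h)) / (σ t - (σ c - h)) with hF
  have hFc : Continuous F := by
    apply Continuous.div <;> [fun_prop; fun_prop; exact n2]
  set D : ℝ → ℂ := fun t => σ' t / (σ t - (σ c + h)) - σ' t / (σ t - (σ c - h)) with hD
  have c1 : Continuous (fun t => σ' t / (σ t - (σ c + h))) :=
    hσ'.div (hσ.sub continuous_const) n1
  have c2 : Continuous (fun t => σ' t / (σ t - (σ c - h))) :=
    hσ'.div (hσ.sub continuous_const) n2
  have hDc : Continuous D := c1.sub c2
  have hslit : ∀ t ∈ Icc a b, t ≠ c → F t ∈ Complex.slitPlane := by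
    intro t ht htc
    by_contra hcon
    rw [Complex.mem_slitPlane_iff] at hcon
    push Not at hcon
    obtain ⟨hre, himz⟩ := hcon
    set x := (F t).re with hx
    have hFx : F t = (x : ℂ) := by
      apply Complex.ext <;> simp [hx, himz]
    have h1x : (1 - x) ≠ 0 := by linarith
    have h1xc : (1 - (x:ℂ)) ≠ 0 := by exact_mod_cast h1x
    have hpos : 0 < 1 - x := by linarith
    apply hseg t ht htc ((1 + x) / (1 - x))
    · rw [abs_le, div_le_iff₀ hpos, le_div_iff₀ hpos]
      constructor <;> linarith
    · simp only [hF] at hFx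
      rw [div_eq_iff (n2 t)] at hFx
      push_cast
      field_simp
      linear_combination hFx
  have hderiv : ∀ t ∈ Ioo a b, t ≠ c → HasDerivAt (fun s => Complex.log (F s)) (D t) t := by
    intro t ht htc
    have h1 : HasDerivAt F _ t := ((hd t ht).sub_const (σ c + h)).div ((hd t ht).sub_const (σ c - h)) (n2 t)
    have h2 := h1.clog_real (hslit t (Ioo_subset_Icc_self ht) htc)
    convert h2 using 1
    simp only [hD, hF]
    have := n1 t
    have := n2 t
    field_simp
    try ring
  have hFat : F c = -1 := by
    simp only [hF]
    have : σ c - (σ c - h) = h := by ring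
    rw [this]
    have : σ c - (σ c + h) = -h := by ring
    rw [this, neg_div, div_self hh]
  have hFlim : Tendsto F (𝓝 c) (𝓝 (-1)) := by
    have := hFc.continuousAt (x := c)
    rw [ContinuousAt, hFat] at this
    exact this
  -- sign of the imaginary part
  have hW : HasDerivAt (fun t => ((σ t - σ c) / h).im) ((σ' c / h).im) c := by
    have h1 := ((hd c ⟨hac, hcb⟩).sub_const (σ c)).div_const h
    exact Complex.imCLM.hasFDerivAt.comp_hasDerivAt c h1
  have hsign := eventually_nhdsWithin_sign_eq_of_deriv_pos (f := fun t => ((σ t - σ c) / h).im)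
    (x₀ := c) (by rw [hW.deriv]; exact him) (by simp)
  have hFim : ∀ t, (F t).im = 2 * ((σ t - σ c) / h).im / Complex.normSq ((σ t - σ c) / h + 1) := by
    intro t
    have hw1 : (σ t - σ c) / h + 1 ≠ 0 := by
      intro h0
      apply n2 t
      field_simp at h0
      linear_combination h0
    have : F t = ((σ t - σ c) / h - 1) / ((σ t - σ c) / h + 1) := by
      have := n2 t
      rw [eq_div_iff hw1]
      simp only [hF]
      field_simp
      ring
    rw [this]
    generalize (σ t - σ c) / h = w at *
    rw [Complex.div_im]
    have : Complex.normSq (w + 1) ≠ 0 := by simpa using hw1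
    field_simp
    simp
    ring
  have hnsq : ∀ t, 0 < Complex.normSq ((σ t - σ c) / h + 1) := by
    intro t
    apply Complex.normSq_pos.2
    intro h0
    apply n2 t
    field_simp at h0
    linear_combination h0
  have hleft : Tendsto (fun t => Complex.log (F t)) (𝓝[<] c) (𝓝 (-(Real.pi * Complex.I))) := by
    have h1 := Complex.tendsto_log_nhdsWithin_im_neg_of_re_neg_of_im_zero (z := -1) (by simp) (by simp)
    simp at h1
    refine h1.comp ?_
    rw [tendsto_nhdsWithin_iff]
    refine ⟨hFlim.mono_left nhdsWithin_le_nhds, ?_⟩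
    filter_upwards [nhdsWithin_le_nhds hsign, self_mem_nhdsWithin] with t ht htc
    have htc' : t - c < 0 := sub_neg.2 htc
    rw [sign_neg htc', sign_eq_neg_one_iff] at ht
    show (F t).im < 0
    rw [hFim]
    exact div_neg_of_neg_of_pos (by linarith) (hnsq t)
  have hright : Tendsto (fun t => Complex.log (F t)) (𝓝[>] c) (𝓝 (Real.pi * Complex.I)) := by
    have h1 := Complex.tendsto_log_nhdsWithin_im_nonneg_of_re_neg_of_im_zero (z := -1) (by simp) (by simp)
    simp at h1
    refine h1.comp ?_
    rw [tendsto_nhdsWithin_iff]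
    refine ⟨hFlim.mono_left nhdsWithin_le_nhds, ?_⟩
    filter_upwards [nhdsWithin_le_nhds hsign, self_mem_nhdsWithin] with t ht htc
    have htc' : 0 < t - c := sub_pos.2 htc
    rw [sign_pos htc', sign_eq_one_iff] at ht
    show 0 ≤ (F t).im
    rw [hFim]
    exact (div_pos (by linarith) (hnsq t)).le
  have hca : ContinuousAt (fun t => Complex.log (F t)) a :=
    hFc.continuousAt.clog (hslit a ⟨le_rfl, hab.le⟩ hac.ne)
  have hcb' : ContinuousAt (fun t => Complex.log (F t)) b :=
    hFc.continuousAt.clog (hslit b ⟨hab.le, le_rfl⟩ hcb.ne')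
  have i1 := intervalIntegral.integral_eq_sub_of_hasDerivAt_of_tendsto hac
    (f := fun t => Complex.log (F t)) (f' := D)
    (fun t ht => hderiv t ⟨ht.1, ht.2.trans hcb⟩ ht.2.ne) (hDc.intervalIntegrable _ _)
    (hca.tendsto.mono_left nhdsWithin_le_nhds) hleft
  have i2 := intervalIntegral.integral_eq_sub_of_hasDerivAt_of_tendsto hcb
    (f := fun t => Complex.log (F t)) (f' := D)
    (fun t ht => hderiv t ⟨hac.trans ht.1, ht.2⟩ ht.1.ne') (hDc.intervalIntegrable _ _)
    hright (hcb'.tendsto.mono_left nhdsWithin_le_nhds)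
  have i3 := intervalIntegral.integral_add_adjacent_intervals
    (hDc.intervalIntegrable (μ := volume) a c) (hDc.intervalIntegrable (μ := volume) c b)
  have i4 := intervalIntegral.integral_sub (c1.intervalIntegrable (μ := volume) a b)
    (c2.intervalIntegrable (μ := volume) a b)
  have R0 : 0 < R := by
    have := norm_nonneg (σ c + h)
    have h2 : ‖σ c + h‖ < R := by simpa using hp
    linarith
  have logF : ∀ t, R ≤ ‖σ t‖ → Complex.log (F t) =
      Complex.log (1 - (σ c + h) / σ t) - Complex.log (1 - (σ c - h) / σ t) := by
    intro t ht
    have h0 : σ t ≠ 0 := by intro h0; rw [h0] at ht; simp at ht; linarith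
    rw [← NL_log_div (NL_re_pos hp ht) (NL_re_pos hm ht)]
    congr 1
    simp only [hF]
    have e1 : 1 - (σ c + h) / σ t = (σ t - (σ c + h)) / σ t := by field_simp
    have e2 : 1 - (σ c - h) / σ t = (σ t - (σ c - h)) / σ t := by field_simp
    rw [e1, e2]
    have := n2 t
    field_simp
  have la := logF a ha
  have lb := logF b hb
  unfold NL_g
  simp only [hD] at i1 i2 i3
  rw [i1, i2, i4] at i3
  simp only [la, lb] at i3
  linear_combination -i3

open Set Topology in
lemma NL_contOn_glue {τ : ℝ → ℂ} {a b c : ℝ} (h1 : ContinuousOn τ (Icc a b))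
    (h2 : ContinuousOn τ (Icc b c)) (hab : a ≤ b) (hbc : b ≤ c) : ContinuousOn τ (Icc a c) := by
  rw [← Icc_union_Icc_eq_Icc hab hbc]
  exact h1.union_of_isClosed h2 isClosed_Icc isClosed_Icc

open Set Topology in
/-- Local inverse packaged. -/
lemma NL_local_inv {f : ℂ → ℂ} (hf : Differentiable ℂ f) {x : ℂ} (hx : deriv f x ≠ 0) :
    ∃ e : OpenPartialHomeomorph ℂ ℂ, x ∈ e.source ∧ (∀ z, e z = f z) := by
  have h1 : HasStrictDerivAt f (deriv f x) x :=
    ((hf.analyticAt x).hasStrictDerivAt)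
  have h2 := h1.hasStrictFDerivAt_equiv hx
  exact ⟨h2.toOpenPartialHomeomorph f, h2.mem_toOpenPartialHomeomorph_source, fun z => rfl⟩

open Set Topology in
lemma NL_lift_step {f : ℂ → ℂ} (hf : Differentiable ℂ f) (κ : ℂ) {K : Set ℂ} (hK : IsCompact K)
    (hd : ∀ z ∈ K, deriv f z ≠ 0) :
    ∃ η > (0:ℝ), ∀ z ∈ K, ∃ τ : ℝ → ℂ, ContinuousOn τ (Icc 0 η) ∧ τ 0 = z ∧
      ∀ s ∈ Icc 0 η, f (τ s) = f z + s * κ := by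
  refine hK.induction_on (p := fun K => ∃ η > (0:ℝ), ∀ z ∈ K, ∃ τ : ℝ → ℂ,
    ContinuousOn τ (Icc 0 η) ∧ τ 0 = z ∧ ∀ s ∈ Icc 0 η, f (τ s) = f z + s * κ) ?_ ?_ ?_ ?_
  · exact ⟨1, one_pos, by simp⟩
  · rintro s t hst ⟨η, h, h2⟩
    exact ⟨η, h, fun z hz => h2 z (hst hz)⟩
  · rintro s t ⟨η, h, h2⟩ ⟨η', h', h2'⟩
    refine ⟨min η η', lt_min h h', ?_⟩
    rintro z (hz | hz)
    · obtain ⟨τ, a1, a2, a3⟩ := h2 z hz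
      have : Icc 0 (min η η') ⊆ Icc 0 η := Icc_subset_Icc_right (min_le_left _ _)
      exact ⟨τ, a1.mono this, a2, fun s hs => a3 s (this hs)⟩
    · obtain ⟨τ, a1, a2, a3⟩ := h2' z hz
      have : Icc 0 (min η η') ⊆ Icc 0 η' := Icc_subset_Icc_right (min_le_right _ _)
      exact ⟨τ, a1.mono this, a2, fun s hs => a3 s (this hs)⟩
  · intro x hx
    obtain ⟨e, hxe, he⟩ := NL_local_inv hf (hd x hx)
    have ht : f x ∈ e.target := by rw [← he]; exact e.map_source hxe
    obtain ⟨r, hr, hrt⟩ := Metric.isOpen_iff.1 e.open_target _ ht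
    have hn : e.source ∩ f ⁻¹' ball (f x) (r/2) ∈ 𝓝 x :=
      inter_mem (e.open_source.mem_nhds hxe)
        (hf.continuous.continuousAt.preimage_mem_nhds (ball_mem_nhds _ (by positivity)))
    refine ⟨_, mem_nhdsWithin_of_mem_nhds hn, r / (2 * (‖κ‖ + 1)), by positivity, ?_⟩
    rintro z ⟨hz1, hz2⟩
    have hmem : ∀ s ∈ Icc 0 (r / (2 * (‖κ‖ + 1))), f z + s * κ ∈ e.target := by
      intro s hs
      apply hrt
      rw [mem_ball, dist_eq_norm]
      have h1 : ‖f z - f x‖ < r / 2 := by simpa [dist_eq_norm] using hz2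
      have h2 : ‖(s:ℂ) * κ‖ ≤ r / 2 := by
        rw [norm_mul, Complex.norm_real, Real.norm_of_nonneg hs.1]
        calc s * ‖κ‖ ≤ (r / (2 * (‖κ‖ + 1))) * (‖κ‖ + 1) := by
              apply mul_le_mul hs.2 (by linarith) (norm_nonneg _) (by positivity)
          _ = r / 2 := by field_simp
      calc ‖f z + s * κ - f x‖ = ‖(f z - f x) + s * κ‖ := by ring_nf
        _ ≤ ‖f z - f x‖ + ‖(s:ℂ) * κ‖ := norm_add_le _ _
        _ < r := by linarith
    refine ⟨fun s => e.symm (f z + s * κ), ?_, ?_, ?_⟩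
    · apply e.continuousOn_symm.comp (by fun_prop)
      exact hmem
    · simp only [Complex.ofReal_zero, zero_mul, add_zero]
      rw [← he, e.left_inv hz1]
    · intro s hs
      simp only
      rw [← he, e.right_inv (hmem s hs)]

open Set Topology in
lemma NL_lift_half {f : ℂ → ℂ} (hf : Differentiable ℂ f) {κ : ℂ} (hκ : ‖κ‖ = 1) (hκr : κ.re = 0)
    {q : ℂ} {R : ℝ} (hq : ‖q‖ < R) (hd : ∀ z, (f z).re = (f q).re → deriv f z ≠ 0) :
    ∃ b > (0:ℝ), ∃ τ : ℝ → ℂ, ContinuousOn τ (Icc 0 b) ∧ τ 0 = q ∧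
      (∀ s ∈ Icc 0 b, f (τ s) = f q + s * κ) ∧ R ≤ ‖τ b‖ := by
  have hKc : IsCompact (closedBall (0:ℂ) R ∩ {z | (f z).re = (f q).re}) := by
    apply (isCompact_closedBall _ _).inter_right
    exact isClosed_eq (Complex.continuous_re.comp hf.continuous) continuous_const
  obtain ⟨η, hη, hstep⟩ := NL_lift_step hf κ hKc (fun z hz => hd z hz.2)
  by_contra hcon
  push Not at hcon
  have hn : ∀ n : ℕ, ∃ τ : ℝ → ℂ, ContinuousOn τ (Icc 0 (n * η)) ∧ τ 0 = q ∧
      (∀ s ∈ Icc 0 (n * η), f (τ s) = f q + s * κ) := by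
    intro n
    induction n with
    | zero =>
      refine ⟨fun _ => q, continuousOn_const, rfl, ?_⟩
      intro s hs
      simp at hs
      simp [hs]
    | succ n ih =>
      obtain ⟨τ, h1, h2, h3⟩ := ih
      have hnη : 0 ≤ n * η := by positivity
      have hlt : ‖τ (n * η)‖ < R := by
        rcases hnη.eq_or_lt with h0 | h0
        · rw [← h0, h2]; exact hq
        · exact hcon _ h0 τ h1 h2 h3
      have hfe := h3 (n * η) ⟨hnη, le_rfl⟩
      obtain ⟨ρ, r1, r2, r3⟩ := hstep (τ (n * η)) ⟨by simpa using hlt.le, by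
        simp only [mem_ofPred_eq]; rw [hfe]; simp [hκr]⟩
      push_cast
      refine ⟨fun s => if s ≤ n * η then τ s else ρ (s - n * η), ?_, ?_, ?_⟩
      · apply NL_contOn_glue (b := n * η) _ _ hnη (by linarith)
        · apply h1.congr
          intro s hs
          simp [hs.2]
        · have : ContinuousOn (fun s => ρ (s - n * η)) (Icc (n * η) ((n + 1) * η)) := by
            apply r1.comp (by fun_prop)
            intro s hs
            constructor
            · linarith [hs.1]
            · linarith [hs.2]
          apply this.congr
          intro s hs
          simp only
          split_ifs with hle
          · have : s = n * η := le_antisymm hle hs.1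
            rw [this]; simp [r2]
          · rfl
      · simp [hnη, h2]
      · intro s hs
        simp only
        split_ifs with hle
        · exact h3 s ⟨hs.1, hle⟩
        · push Not at hle
          rw [r3 _ ⟨by linarith, by linarith [hs.2]⟩, hfe]
          push_cast
          ring
  obtain ⟨M, hM⟩ := (isCompact_closedBall (0:ℂ) R).exists_bound_of_continuousOn hf.continuous.continuousOn
  obtain ⟨n, hn1⟩ := exists_nat_gt ((M + ‖f q‖) / η)
  obtain ⟨τ, h1, h2, h3⟩ := hn (n + 1)
  have hpos : 0 < ((n + 1 : ℕ):ℝ) * η := by positivity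
  have hlt := hcon _ hpos τ h1 h2 h3
  have hfe := h3 _ ⟨hpos.le, le_rfl⟩
  have hb := hM _ (by simpa using hlt.le : τ (((n + 1 : ℕ):ℝ) * η) ∈ closedBall (0:ℂ) R)
  have e1 : ‖((((n + 1 : ℕ):ℝ) * η : ℝ) : ℂ) * κ‖ = ((n + 1 : ℕ):ℝ) * η := by
    rw [norm_mul, hκ, mul_one, Complex.norm_real, Real.norm_of_nonneg hpos.le]
  have e2 : ((((n + 1 : ℕ):ℝ) * η : ℝ) : ℂ) * κ = f (τ (((n + 1 : ℕ):ℝ) * η)) - f q := by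
    rw [hfe]; ring
  have e3 := norm_sub_le (f (τ (((n + 1 : ℕ):ℝ) * η))) (f q)
  rw [← e2, e1] at e3
  rw [div_lt_iff₀ hη] at hn1
  push_cast at e3 hb
  nlinarith

open Set Topology in
lemma NL_lift {f : ℂ → ℂ} (hf : Differentiable ℂ f)
    {q : ℂ} {R : ℝ} (hq : ‖q‖ < R) (hd : ∀ z, (f z).re = (f q).re → deriv f z ≠ 0) :
    ∃ a < (0:ℝ), ∃ b > (0:ℝ), ∃ σ : ℝ → ℂ, Continuous σ ∧ σ 0 = q ∧
      (∀ t, ∃ s ∈ Icc a b, σ t = σ s) ∧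
      (∀ s ∈ Icc a b, f (σ s) = f q + s * Complex.I) ∧ R ≤ ‖σ a‖ ∧ R ≤ ‖σ b‖ ∧
      ∀ t ∈ Ioo a b, HasDerivAt σ (Complex.I / deriv f (σ t)) t := by
  obtain ⟨b, hb, τ, t1, t2, t3, t4⟩ := NL_lift_half hf (κ := Complex.I) (by simp) (by simp) hq hd
  obtain ⟨a, ha, ρ, r1, r2, r3, r4⟩ := NL_lift_half hf (κ := -Complex.I) (by simp) (by simp) hq hd
  set ψ : ℝ → ℂ := fun s => if s ≤ 0 then ρ (-s) else τ s with hψ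
  have hψc : ContinuousOn ψ (Icc (-a) b) := by
    apply NL_contOn_glue (b := 0) _ _ (by linarith) hb.le
    · have : ContinuousOn (fun s => ρ (-s)) (Icc (-a) 0) := by
        apply r1.comp (by fun_prop)
        intro s hs
        constructor
        · linarith [hs.2]
        · linarith [hs.1]
      apply this.congr
      intro s hs
      simp [hψ, hs.2]
    · apply t1.congr
      intro s hs
      simp only [hψ]
      split_ifs with hle
      · have : s = 0 := le_antisymm hle hs.1
        rw [this]; simp [r2, t2]
      · rfl
  have hab : -a ≤ b := by linarith
  have hψf : ∀ s ∈ Icc (-a) b, f (ψ s) = f q + s * Complex.I := by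
    intro s hs
    simp only [hψ]
    split_ifs with hle
    · rw [r3 (-s) ⟨by linarith, by linarith [hs.1]⟩]
      push_cast; ring
    · exact t3 s ⟨by linarith, hs.2⟩
  set σ : ℝ → ℂ := fun t => ψ (projIcc (-a) b hab t) with hσ
  have hσe : ∀ s ∈ Icc (-a) b, σ s = ψ s := by
    intro s hs
    simp only [hσ, projIcc_of_mem hab hs]
  have hσc : Continuous σ := by
    have := (continuousOn_iff_continuous_domRestrict.1 hψc).comp (continuous_projIcc (h := hab))
    exact this
  have hσf : ∀ s ∈ Icc (-a) b, f (σ s) = f q + s * Complex.I := fun s hs => by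
    rw [hσe s hs, hψf s hs]
  refine ⟨-a, by linarith, b, hb, σ, hσc, ?_, ?_, hσf, ?_, ?_, ?_⟩
  · rw [hσe 0 ⟨by linarith, hb.le⟩]; simp [hψ, r2]
  · intro t
    refine ⟨projIcc (-a) b hab t, (projIcc (-a) b hab t).2, ?_⟩
    rw [hσe _ (projIcc (-a) b hab t).2]
  · rw [hσe _ ⟨le_rfl, hab⟩]; simp [hψ, ha.le, r4]
  · rw [hσe _ ⟨hab, le_rfl⟩]; simp [hψ, not_le.2 hb, t4]
  · intro t ht
    have hdt : deriv f (σ t) ≠ 0 := hd _ (by rw [hσf t (Ioo_subset_Icc_self ht)]; simp)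
    have hs : HasStrictDerivAt f (deriv f (σ t)) (σ t) := (hf.analyticAt _).hasStrictDerivAt
    have hinv := hs.to_localInverse hdt
    have hev : ∀ᶠ z in 𝓝 (σ t), HasStrictDerivAt.localInverse f _ _ hs hdt (f z) = z :=
      (hs.hasStrictFDerivAt_equiv hdt).eventually_left_inverse
    have hline : HasDerivAt (fun s : ℝ => f q + s * Complex.I) Complex.I t := by
      have := ((Complex.ofRealCLM.hasDerivAt (x := t)).mul_const Complex.I).const_add (f q)
      simpa using this
    have hcomp : HasDerivAt (fun s : ℝ => HasStrictDerivAt.localInverse f _ _ hs hdt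
        (f q + s * Complex.I)) ((deriv f (σ t))⁻¹ * Complex.I) t := by
      have h1 : HasDerivAt (HasStrictDerivAt.localInverse f _ _ hs hdt) (deriv f (σ t))⁻¹
        (f q + (t:ℝ) * Complex.I) := by
        rw [← hσf t (Ioo_subset_Icc_self ht)]; exact hinv.hasDerivAt
      exact h1.comp t hline
    have heq : σ =ᶠ[𝓝 t] (fun s : ℝ => HasStrictDerivAt.localInverse f _ _ hs hdt
        (f q + s * Complex.I)) := by
      filter_upwards [hσc.continuousAt.eventually hev, Ioo_mem_nhds ht.1 ht.2] with s h1 h2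
      rw [← hσf s (Ioo_subset_Icc_self h2), h1]
    refine (hcomp.congr_of_eventuallyEq heq).congr_deriv ?_
    rw [div_eq_mul_inv, mul_comm]
open Set Topology in
lemma NL_local {f : ℂ → ℂ} (hf : Differentiable ℂ f) {p : ℂ} (hp : deriv f p ≠ 0) :
    ∃ (h : ℂ) (ρ δ : ℝ), h ≠ 0 ∧ 0 < ρ ∧ 0 < δ ∧ ∀ q ∈ ball p ρ,
      (∀ w : ℝ, |w| ≤ 1 → |(f (q + w * h) - f q).re - w * δ| ≤ |w| * δ / 2) ∧
      0 < (Complex.I / deriv f q / h).im := by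
  have hs : HasStrictDerivAt f (deriv f p) p := (hf.analyticAt p).hasStrictDerivAt
  have hn : 0 < ‖deriv f p‖ := norm_pos_iff.2 hp
  have h1 := hs.isLittleO.def (c := ‖deriv f p‖ / 2) (by positivity)
  rw [nhds_prod_eq] at h1
  obtain ⟨r, hr, h1⟩ := Metric.eventually_nhds_iff_ball.1 (nhds_prod_eq (x := p) (y := p) ▸ h1)
  have hdc : Continuous (deriv f) := hf.contDiff.continuous_deriv (n := 1) le_rfl
  have h2 : ∀ᶠ q in 𝓝 p, 0 < (deriv f p / deriv f q).re := by
    have hc : ContinuousAt (fun q => (deriv f p / deriv f q).re) p :=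
      Complex.continuous_re.continuousAt.comp
        (continuousAt_const.div hdc.continuousAt hp)
    apply hc.eventually (lt_mem_nhds _)
    simp [div_self hp]
  obtain ⟨r', hr', h2⟩ := Metric.eventually_nhds_iff_ball.1 h2
  set δ := ‖deriv f p‖ * r / 4 with hδ
  have hδ0 : 0 < δ := by positivity
  refine ⟨δ / deriv f p, min r' (r/2), δ, ?_, by positivity, hδ0, ?_⟩
  · apply div_ne_zero _ hp
    exact_mod_cast hδ0.ne'
  · intro q hq
    have hq1 : q ∈ ball p r' := ball_subset_ball (min_le_left _ _) hq
    have hq2 : q ∈ ball p (r/2) := ball_subset_ball (min_le_right _ _) hq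
    constructor
    · intro w hw
      have hnorm : ‖(w:ℂ) * (δ / deriv f p)‖ = |w| * r / 4 := by
        rw [norm_mul, norm_div, Complex.norm_real, Complex.norm_real, Real.norm_eq_abs,
          Real.norm_of_nonneg hδ0.le, hδ]
        field_simp
      have hmem : (q + w * (δ / deriv f p), q) ∈ ball (p, p) r := by
        rw [← ball_prod_same]
        constructor
        · show q + w * (δ / deriv f p) ∈ ball p r
          rw [mem_ball, dist_eq_norm] at hq2 ⊢
          calc ‖q + w * (δ / deriv f p) - p‖ = ‖(q - p) + w * (δ / deriv f p)‖ := by ring_nf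
            _ ≤ ‖q - p‖ + ‖(w:ℂ) * (δ / deriv f p)‖ := norm_add_le _ _
            _ < r := by rw [hnorm]; nlinarith
        · exact ball_subset_ball (by linarith) hq2
      have h3 := h1 _ hmem
      simp only at h3
      have e1 : q + w * (δ / deriv f p) - q = w * (δ / deriv f p) := by ring
      rw [e1, hnorm] at h3
      have e2 : (w : ℂ) * (δ / deriv f p) * deriv f p = ((w * δ : ℝ) : ℂ) := by
        push_cast; field_simp
      have e3 : (f (q + w * (δ / deriv f p)) - f q).re - w * δ =
          (f (q + w * (δ / deriv f p)) - f q - ((w * δ : ℝ) : ℂ)).re := by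
        rw [Complex.sub_re _ (((w * δ : ℝ) : ℂ)), Complex.ofReal_re]
      rw [e3]
      refine (Complex.abs_re_le_norm _).trans ?_
      rw [← e2]
      have e4 : |w| * δ / 2 = ‖deriv f p‖ / 2 * (|w| * r / 4) := by rw [hδ]; ring
      rw [e4]
      rw [ContinuousLinearMap.toSpanSingleton_apply, smul_eq_mul] at h3
      exact h3
    · have h3 := h2 q hq1
      have hq0 : deriv f q ≠ 0 := by intro h; rw [h] at h3; simp at h3
      have e1 : Complex.I / deriv f q / (δ / deriv f p) =
        ((δ⁻¹ : ℝ) : ℂ) * (deriv f p / deriv f q) * Complex.I := by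
        push_cast; field_simp
      rw [e1, Complex.mul_I_im, Complex.re_ofReal_mul]
      positivity

open Set Topology in
lemma NL_Q {f : ℂ → ℂ} (hf : Differentiable ℂ f) {p : ℂ} (hp : deriv f p ≠ 0) :
    ∃ Q : ℂ → ℂ, Tendsto Q (𝓝 (f p)) (𝓝 p) ∧ ∀ᶠ w in 𝓝 (f p), f (Q w) = w := by
  obtain ⟨e, hxe, he⟩ := NL_local_inv hf hp
  have ht : f p ∈ e.target := by rw [← he]; exact e.map_source hxe
  refine ⟨e.symm, ?_, ?_⟩
  · have := (e.continuousAt_symm ht).tendsto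
    rwa [← he, e.left_inv hxe, he] at this
  · filter_upwards [e.open_target.mem_nhds ht] with w hw
    rw [← he, e.right_inv hw]

open Set Topology in
lemma NL_small {f : ℂ → ℂ} (hf : Differentiable ℂ f) {K : Set ℂ} (hK : IsCompact K)
    (hne : ∀ z ∈ K, (f z).re ≠ 0) : ∀ᶠ ε : ℝ in 𝓝 0, ∀ z ∈ K, |ε| < |(f z).re| := by
  rcases K.eq_empty_or_nonempty with h | h
  · simp [h]
  · obtain ⟨z0, hz0, hmin⟩ := hK.exists_isMinOn h (f := fun z => |(f z).re|)
      ((Complex.continuous_re.comp hf.continuous).abs.continuousOn)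
    have hpos : 0 < |(f z0).re| := abs_pos.2 (hne z0 hz0)
    have h1 : ∀ᶠ ε : ℝ in 𝓝 0, |ε| < |(f z0).re| := by
      have := (continuous_abs (G := ℝ)).tendsto 0
      rw [abs_zero] at this
      exact this.eventually (gt_mem_nhds hpos)
    filter_upwards [h1] with ε hε z hz
    exact hε.trans_le (hmin hz)

open Set Topology in
lemma NL_big {K : Set ℂ} (hK : IsCompact K) : ∀ᶠ R : ℝ in atTop, K ⊆ ball (0:ℂ) R := by
  obtain ⟨r, hr⟩ := hK.isBounded.subset_ball 0
  filter_upwards [eventually_ge_atTop r] with R hR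
  exact hr.trans (ball_subset_ball hR)

/-- sign attached to a boolean -/
def NL_sg (b : Bool) : ℝ := if b then 1 else -1

open Set Topology in
lemma NL_index {f : ℂ → ℂ} (hf : Differentiable ℂ f)
    (hcrit : ((fun z => (f z).re) '' {z | deriv f z = 0}).Countable)
    {n : ℕ} (p : Fin n → ℂ) (hpi : Function.Injective p) (w0 : ℂ) (hw0 : w0.re = 0)
    (hpw : ∀ j, f (p j) = w0) (hpd : ∀ j, deriv f (p j) ≠ 0) :
    ∃ (X : Fin n × Bool → ℂ) (g : Fin n → Fin n × Bool → ℂ),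
      (∀ α, (f (X α)).re ≠ 0) ∧
      (∀ α β, connectedComponentIn {z | (f z).re ≠ 0} (X α) =
        connectedComponentIn {z | (f z).re ≠ 0} (X β) → ∀ i, g i α = g i β) ∧
      ∀ i j, g i (j, true) - g i (j, false) = if i = j then -(2 * Real.pi * Complex.I) else 0 := by
  choose h ρ δ hh hρ hδ hloc using fun j => NL_local hf (hpd j)
  choose Q hQ1 hQ2 using fun j => NL_Q hf (hpd j)
  simp only [hpw] at hQ1 hQ2
  set S : Set ℂ := {z | (f z).re ≠ 0} with hS
  have hSo : IsOpen S :=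
    isOpen_ne_fun (Complex.continuous_re.comp hf.continuous) continuous_const
  set X : Fin n × Bool → ℂ := fun α => p α.1 + NL_sg α.2 * h α.1 with hX
  have habs : ∀ b, |NL_sg b| = 1 := by intro b; cases b <;> simp [NL_sg]
  -- values along the short segments
  have hval : ∀ j, ∀ q ∈ ball (p j) (ρ j), ∀ w : ℝ, |w| ≤ 1 →
      (f (q + w * h j)).re = (f q).re → w = 0 := by
    intro j q hq w hw he
    have h1 := (hloc j q hq).1 w hw
    rw [Complex.sub_re, he, sub_self, zero_sub, abs_neg, abs_mul, abs_of_pos (hδ j)] at h1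
    by_contra hw0
    have : 0 < |w| * δ j := mul_pos (abs_pos.2 hw0) (hδ j)
    linarith
  have hXS : ∀ α, X α ∈ S := by
    intro α h0
    have := hval α.1 (p α.1) (mem_ball_self (hρ _)) (NL_sg α.2) (habs _).le
      (by rw [hpw, hw0]; exact h0)
    have h1 := habs α.2
    rw [this] at h1; simp at h1
  -- connecting sets
  have hconn : ∀ α β, ∃ K : Set ℂ, IsCompact K ∧ K ⊆ S ∧ (connectedComponentIn S (X α) =
      connectedComponentIn S (X β) → IsPreconnected K ∧ X α ∈ K ∧ X β ∈ K) := by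
    intro α β
    by_cases hc : connectedComponentIn S (X α) = connectedComponentIn S (X β)
    · have ho : IsOpen (connectedComponentIn S (X α)) := hSo.connectedComponentIn
      have hcn : IsConnected (connectedComponentIn S (X α)) :=
        isConnected_connectedComponentIn_iff.2 (hXS α)
      have hpc := (ho.isConnected_iff_isPathConnected).1 hcn
      have hXα : X α ∈ connectedComponentIn S (X α) := mem_connectedComponentIn (hXS α)
      have hXβ : X β ∈ connectedComponentIn S (X α) := hc ▸ mem_connectedComponentIn (hXS β)
      obtain ⟨γ, hγ⟩ := hpc.joinedIn _ hXα _ hXβ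
      refine ⟨range γ, isCompact_range γ.continuous, ?_, fun _ => ⟨isPreconnected_range γ.continuous,
        ⟨0, γ.source⟩, ⟨1, γ.target⟩⟩⟩
      rintro _ ⟨t, rfl⟩
      exact connectedComponentIn_subset _ _ (hγ t)
    · exact ⟨∅, isCompact_empty, empty_subset _, fun h => absurd h hc⟩
  choose K hKc hKS hKp using hconn
  have hball : ∀ α, ∃ r > 0, closedBall (X α) r ⊆ S := by
    intro α
    exact Metric.nhds_basis_closedBall.mem_iff.1 (hSo.mem_nhds (hXS α))
  choose r hr hrS using hball
  -- eventual statements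
  have hlim : Tendsto (fun ε : ℝ => w0 + (ε : ℂ)) (𝓝 0) (𝓝 w0) := by
    have : Continuous (fun ε : ℝ => w0 + (ε : ℂ)) := by fun_prop
    simpa using this.tendsto 0
  have E1 : ∀ᶠ ε : ℝ in 𝓝 0, ∀ j, f (Q j (w0 + ε)) = w0 + ε :=
    eventually_all.2 fun j => hlim.eventually (hQ2 j)
  have hQl : ∀ j, Tendsto (fun ε : ℝ => Q j (w0 + ε)) (𝓝 0) (𝓝 (p j)) := fun j =>
    (hQ1 j).comp hlim
  have E2 : ∀ᶠ ε : ℝ in 𝓝 0, ∀ j, Q j (w0 + ε) ∈ ball (p j) (ρ j) :=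
    eventually_all.2 fun j => (hQl j).eventually (ball_mem_nhds _ (hρ j))
  have E3 : ∀ᶠ ε : ℝ in 𝓝 0, ∀ i j, i ≠ j → Q i (w0 + ε) ≠ Q j (w0 + ε) := by
    refine eventually_all.2 fun i => eventually_all.2 fun j => ?_
    by_cases hij : i = j
    · simp [hij]
    · filter_upwards [((hQl i).sub (hQl j)).eventually_ne
        (sub_ne_zero.2 (fun h => hij (hpi h)))] with ε h1 _
      exact sub_ne_zero.1 h1
  have E4 : ∀ᶠ ε : ℝ in 𝓝 0, ∀ α : Fin n × Bool,
      Q α.1 (w0 + ε) + NL_sg α.2 * h α.1 ∈ closedBall (X α) (r α) := by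
    refine eventually_all.2 fun α => ?_
    have : Tendsto (fun ε : ℝ => Q α.1 (w0 + ε) + NL_sg α.2 * h α.1) (𝓝 0) (𝓝 (X α)) :=
      (hQl α.1).add_const _
    exact this.eventually (closedBall_mem_nhds _ (hr α))
  have E5 : ∀ᶠ ε : ℝ in 𝓝 0, ∀ α β, ∀ z ∈ K α β, |ε| < |(f z).re| :=
    eventually_all.2 fun α => eventually_all.2 fun β =>
      NL_small hf (hKc α β) (fun z hz => hKS α β hz)
  have E6 : ∀ᶠ ε : ℝ in 𝓝 0, ∀ α, ∀ z ∈ closedBall (X α) (r α), |ε| < |(f z).re| :=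
    eventually_all.2 fun α =>
      NL_small hf (isCompact_closedBall _ _) (fun z hz => hrS α hz)
  -- a regular value
  obtain ⟨ε, hεc, e1, e2, e3, e4, e5, e6⟩ : ∃ ε : ℝ,
      ε ∉ ((fun z => (f z).re) '' {z | deriv f z = 0}) ∧
      (∀ j, f (Q j (w0 + ε)) = w0 + ε) ∧ (∀ j, Q j (w0 + ε) ∈ ball (p j) (ρ j)) ∧
      (∀ i j, i ≠ j → Q i (w0 + ε) ≠ Q j (w0 + ε)) ∧
      (∀ α : Fin n × Bool, Q α.1 (w0 + ε) + NL_sg α.2 * h α.1 ∈ closedBall (X α) (r α)) ∧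
      (∀ α β, ∀ z ∈ K α β, |ε| < |(f z).re|) ∧
      (∀ α, ∀ z ∈ closedBall (X α) (r α), |ε| < |(f z).re|) := by
    have hev := (E1.and (E2.and (E3.and (E4.and (E5.and E6)))))
    have hdense := hcrit.dense_compl ℝ
    obtain ⟨ε, h1, h2⟩ := (mem_closure_iff_frequently.1 (hdense 0)).and_eventually hev |>.exists
    exact ⟨ε, h1, h2⟩
  set q : Fin n → ℂ := fun j => Q j (w0 + ε) with hq
  have hqf : ∀ j, f (q j) = w0 + ε := e1
  have hqre : ∀ j, (f (q j)).re = ε := by intro j; rw [hqf]; simp [hw0]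
  -- large radius
  set T : Fin n → Set ℂ := fun j => (fun w : ℝ => q j + w * h j) '' Icc (-1) 1 with hT
  have hTc : ∀ j, IsCompact (T j) := fun j => isCompact_Icc.image (by fun_prop)
  have hTp : ∀ j, IsPreconnected (T j) := fun j =>
    isPreconnected_Icc.image _ (by fun_prop)
  obtain ⟨R, R1, R2, R3⟩ : ∃ R : ℝ, (∀ α β, K α β ⊆ ball 0 R) ∧
      (∀ α, closedBall (X α) (r α) ⊆ ball 0 R) ∧ (∀ j, T j ⊆ ball 0 R) := by
    have F1 : ∀ᶠ R : ℝ in atTop, ∀ α β, K α β ⊆ ball (0:ℂ) R :=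
      eventually_all.2 fun α => eventually_all.2 fun β => NL_big (hKc α β)
    have F2 : ∀ᶠ R : ℝ in atTop, ∀ α, closedBall (X α) (r α) ⊆ ball (0:ℂ) R :=
      eventually_all.2 fun α => NL_big (isCompact_closedBall _ _)
    have F3 : ∀ᶠ R : ℝ in atTop, ∀ j, T j ⊆ ball (0:ℂ) R :=
      eventually_all.2 fun j => NL_big (hTc j)
    obtain ⟨R, h⟩ := (F1.and (F2.and F3)).exists
    exact ⟨R, h⟩
  have hqT : ∀ j, q j ∈ T j := fun j => ⟨0, by simp, by simp⟩
  have hreg : ∀ z, (f z).re = ε → deriv f z ≠ 0 := fun z hz h0 => hεc ⟨z, h0, hz⟩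
  have hlift : ∀ i, _ := fun i => NL_lift hf (q := q i) (R := R) (by simpa using R3 i (hqT i))
    (fun z hz => hreg z (hz.trans (hqre i)))
  choose a ha b hb σ s1 s2 s3 s4 s5 s6 s7 using hlift
  have hσre : ∀ i t, (f (σ i t)).re = ε := by
    intro i t
    obtain ⟨s, hs, hst⟩ := s3 i t
    rw [hst, s4 i s hs]
    simp [hqre]
  have hdc : Continuous (deriv f) := hf.contDiff.continuous_deriv (n := 1) le_rfl
  have hσ'c : ∀ i, Continuous (fun t => Complex.I / deriv f (σ i t)) := fun i =>
    continuous_const.div (hdc.comp (s1 i)) (fun t => hreg _ (hσre i t))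
  have hGc : ∀ i (A : Set ℂ), IsPreconnected A → A ⊆ ball 0 R → (∀ z ∈ A, ∀ t, σ i t ≠ z) →
      ∀ x ∈ A, ∀ y ∈ A, NL_g (σ i) (fun t => Complex.I / deriv f (σ i t)) (a i) (b i) x =
        NL_g (σ i) (fun t => Complex.I / deriv f (σ i t)) (a i) (b i) y := by
    intro i A hA hAR hAσ x hx y hy
    exact NL_g_const (s1 i) (hσ'c i) ((ha i).trans (hb i)).le (s7 i) (s5 i) (s6 i) hA hAR hAσ hx hy
  have havoid : ∀ (A : Set ℂ), (∀ z ∈ A, |ε| < |(f z).re|) → ∀ i, ∀ z ∈ A, ∀ t, σ i t ≠ z := by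
    intro A hA i z hz t hc
    have h1 := hA z hz
    rw [← hc, hσre] at h1
    exact lt_irrefl _ h1
  have hXY : ∀ i (α : Fin n × Bool),
      NL_g (σ i) (fun t => Complex.I / deriv f (σ i t)) (a i) (b i) (X α) =
      NL_g (σ i) (fun t => Complex.I / deriv f (σ i t)) (a i) (b i) (q α.1 + NL_sg α.2 * h α.1) := by
    intro i α
    exact hGc i _ (convex_closedBall (X α) (r α)).isPreconnected (R2 α) (havoid _ (e6 α) i) _
      (mem_closedBall_self (hr α).le) _ (e4 α)
  -- points of the curves on short segments
  have hmeet : ∀ i j t (w : ℝ), |w| ≤ 1 → σ i t = q j + w * h j → w = 0 ∧ i = j ∧ σ i t = q i := by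
    intro i j t w hw he
    have h1 : w = 0 := by
      apply hval j (q j) (e2 j) w hw
      rw [← he, hσre, hqre]
    have h2 : σ i t = q j := by rw [he, h1]; simp
    obtain ⟨s, hs, hst⟩ := s3 i t
    have h3 := s4 i s hs
    rw [← hst, h2, hqf, hqf] at h3
    have h4 : s = 0 := by
      have : (s : ℂ) * Complex.I = 0 := by linear_combination -h3
      simpa using this
    rw [h4, s2] at hst
    have hij : i = j := by
      by_contra hij
      exact e3 i j hij (hst.symm.trans h2)
    exact ⟨h1, hij, hst⟩
  refine ⟨X, fun i α => NL_g (σ i) (fun t => Complex.I / deriv f (σ i t)) (a i) (b i) (X α),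
    hXS, ?_, ?_⟩
  · intro α β hc i
    obtain ⟨k1, k2, k3⟩ := hKp α β hc
    exact hGc i _ k1 (R1 α β) (havoid _ (e5 α β) i) _ k2 _ k3
  · intro i j
    simp only
    rw [hXY i (j, true), hXY i (j, false)]
    simp only [NL_sg, if_true, Bool.false_eq_true, if_false]
    split_ifs with hij
    · subst hij
      have hm1 : q i + h i ∈ T i := ⟨1, by simp, by simp⟩
      have hm2 : q i - h i ∈ T i := ⟨-1, by simp, by push_cast; ring⟩
      have := NL_g_jump (s1 i) (hσ'c i) (ha i) (hb i) (s7 i) (s5 i) (s6 i) (hh i)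
        (by rw [s2]; exact R3 i hm1) (by rw [s2]; exact R3 i hm2)
        (by
          intro t ht
          rw [s2] at ht
          have := (hmeet i i t 1 (by simp) (by rw [ht]; simp)).1
          norm_num at this)
        (by
          intro t ht
          rw [s2] at ht
          have := (hmeet i i t (-1) (by simp) (by rw [ht]; push_cast; ring)).1
          norm_num at this)
        (by
          intro t ht ht0 w hw he
          rw [s2] at he
          have h3 := (hmeet i i t w hw he).2.2
          have h4 := s4 i t ht
          rw [h3] at h4
          apply ht0
          have : (t : ℂ) * Complex.I = 0 := by linear_combination -h4
          simpa using this)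
        (by rw [s2]; exact (hloc i (q i) (e2 i)).2)
      rw [s2] at this
      rw [← this]
      congr 2
      · push_cast; ring
      · push_cast; ring
    · rw [sub_eq_zero]
      apply hGc i (T j) (hTp j) (R3 j)
      · rintro z ⟨w, hw, rfl⟩ t he
        exact hij (hmeet i j t w (abs_le.2 hw) he).2.1
      · exact ⟨1, by simp, by simp⟩
      · exact ⟨-1, by simp, by simp⟩

lemma NL_count {f : ℂ → ℂ} (hf : Differentiable ℂ f)
    (hcrit : ((fun z => (f z).re) '' {z | deriv f z = 0}).Countable) {k : ℕ} (hk : 1 ≤ k)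
    (hfin : (nodalComponents {z | (f z).re ≠ 0}).Finite)
    (hcard : (nodalComponents {z | (f z).re ≠ 0}).ncard ≤ k)
    {n : ℕ} (p : Fin n → ℂ) (hpi : Function.Injective p) (w0 : ℂ) (hw0 : w0.re = 0)
    (hpw : ∀ j, f (p j) = w0) (hpd : ∀ j, deriv f (p j) ≠ 0) : n + 1 ≤ k := by
  classical
  rcases Nat.eq_zero_or_pos n with hn | hn
  · omega
  obtain ⟨X, g, h1, h2, h3⟩ := NL_index hf hcrit p hpi w0 hw0 hpw hpd
  set S : Set ℂ := {z | (f z).re ≠ 0} with hS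
  have : Fintype (nodalComponents S) := hfin.fintype
  let comp : Fin n × Bool → nodalComponents S := fun α =>
    ⟨connectedComponentIn S (X α), X α, h1 α, rfl⟩
  let Φ : (nodalComponents S → ℂ) →ₗ[ℂ] (Fin n → ℂ) :=
    { toFun := fun φ j => φ (comp (j, true)) - φ (comp (j, false))
      map_add' := by intro a b; funext j; simp; ring
      map_smul' := by intro a b; funext j; simp; ring }
  have hfac : ∀ i, ∃ φ : nodalComponents S → ℂ, ∀ α, φ (comp α) = g i α := by
    intro i
    refine ⟨fun C => if h : ∃ α, comp α = C then g i h.choose else 0, fun α => ?_⟩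
    have hex : ∃ β, comp β = comp α := ⟨α, rfl⟩
    simp only [hex, dif_pos]
    exact h2 _ _ (congrArg Subtype.val hex.choose_spec) i
  choose φ hφ using hfac
  have hpi0 : -(2 * Real.pi * Complex.I) ≠ 0 := by
    simp [Real.pi_ne_zero]
  have hsurj : Function.Surjective Φ := by
    intro v
    refine ⟨∑ i, (v i / -(2 * Real.pi * Complex.I)) • φ i, ?_⟩
    rw [map_sum]
    funext j
    rw [Finset.sum_apply, Finset.sum_eq_single j]
    · show (Φ ((v j / -(2 * Real.pi * Complex.I)) • φ j)) j = _
      rw [map_smul]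
      show (v j / -(2 * Real.pi * Complex.I)) * (φ j (comp (j, true)) - φ j (comp (j, false))) = v j
      rw [hφ, hφ, h3, if_pos rfl]
      field_simp
    · intro i _ hij
      rw [map_smul]
      show (v i / -(2 * Real.pi * Complex.I)) * (φ i (comp (j, true)) - φ i (comp (j, false))) = 0
      rw [hφ, hφ, h3, if_neg hij, mul_zero]
    · simp
  have hker : 0 < Module.finrank ℂ (LinearMap.ker Φ) := by
    rw [Module.finrank_pos_iff_exists_ne_zero]
    refine ⟨⟨fun _ => 1, ?_⟩, ?_⟩
    · rw [LinearMap.mem_ker]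
      funext j
      show (1 : ℂ) - 1 = 0
      ring
    · intro h
      have h4 := congrFun (congrArg Subtype.val h) (comp (⟨0, hn⟩, true))
      simp at h4
  have hrn := LinearMap.finrank_range_add_finrank_ker Φ
  rw [LinearMap.range_eq_top.2 hsurj, finrank_top, Module.finrank_fintype_fun_eq_card,
    Module.finrank_fintype_fun_eq_card, Fintype.card_fin, ← Nat.card_eq_fintype_card,
    Nat.card_coe_set_eq] at hrn
  omega

open Set Topology in
lemma NL_crit_countable {f : ℂ → ℂ} (hf : Differentiable ℂ f) (hnc : ¬ ∃ c, ∀ z, f z = c) :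
    {z | deriv f z = 0}.Countable := by
  have han : AnalyticOnNhd ℂ (deriv f) univ := fun z _ => (hf.analyticAt z).deriv
  have hne : ∃ x, deriv f x ≠ 0 := by
    by_contra h
    push Not at h
    exact hnc ⟨f 0, fun z => is_const_of_deriv_eq_zero hf h z 0⟩
  obtain ⟨x, hx⟩ := hne
  have h1 := han.preimage_zero_mem_codiscrete (x := x) hx
  have h2 : {z | deriv f z = 0} = (deriv f ⁻¹' {0}ᶜ)ᶜ := by ext; simp
  rw [h2]
  have h3 : IsDiscrete ((deriv f ⁻¹' {0}ᶜ)ᶜ ∩ univ) :=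
    isDiscrete_of_codiscreteWithin (by rw [compl_compl]; exact h1)
  rw [inter_univ] at h3
  exact (HereditarilyLindelofSpace.isLindelof _).countable_of_isDiscrete h3

open Set Topology in
lemma NL_gap {f : ℂ → ℂ} (hf : Differentiable ℂ f) (hnc : ¬ ∃ c, ∀ z, f z = c) {N : ℕ}
    (hN : ∀ (t : ℝ) (s : Finset ℂ), (∀ z ∈ s, f z = t * Complex.I ∧ deriv f z ≠ 0) → s.card ≤ N) :
    ∃ a b R : ℝ, a < b ∧ 0 < R ∧ ∀ z, R < ‖z‖ → ∀ t ∈ Icc a b, f z ≠ t * Complex.I := by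
  classical
  let P : ℕ → Prop := fun m => ∃ (t : ℝ) (s : Finset ℂ), s.card = m ∧
    ∀ z ∈ s, f z = t * Complex.I ∧ deriv f z ≠ 0
  have hP0 : P 0 := ⟨0, ∅, by simp, by simp⟩
  have hPb : ∀ m, P m → m ≤ N := by
    rintro m ⟨t, s, rfl, hs⟩
    exact hN t s hs
  obtain ⟨m, hm, hmax⟩ : ∃ m, P m ∧ ∀ m', P m' → m' ≤ m :=
    ⟨Nat.findGreatest P N, Nat.findGreatest_spec (Nat.zero_le N) hP0,
      fun m' h => Nat.le_findGreatest (hPb m' h) h⟩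
  obtain ⟨t0, s, hsm, hs⟩ := hm
  choose Q hQ1 hQ2 using fun p : s => NL_Q hf (hs p.1 p.2).2
  have hlim : Tendsto (fun t : ℝ => (t : ℂ) * Complex.I) (𝓝 t0) (𝓝 (t0 * Complex.I)) := by
    have : Continuous (fun t : ℝ => (t : ℂ) * Complex.I) := by fun_prop
    exact this.tendsto t0
  have hlim2 : ∀ p : s, Tendsto (fun t : ℝ => (t : ℂ) * Complex.I) (𝓝 t0) (𝓝 (f p)) := by
    intro p; rw [(hs p.1 p.2).1]; exact hlim
  have hQl : ∀ p : s, Tendsto (fun t : ℝ => Q p (t * Complex.I)) (𝓝 t0) (𝓝 (p : ℂ)) := fun p =>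
    (hQ1 p).comp (hlim2 p)
  have hdc : Continuous (deriv f) := hf.contDiff.continuous_deriv (n := 1) le_rfl
  have E1 : ∀ᶠ t : ℝ in 𝓝 t0, ∀ p : s, f (Q p (t * Complex.I)) = t * Complex.I :=
    eventually_all.2 fun p => (hlim2 p).eventually (hQ2 p)
  have E2 : ∀ᶠ t : ℝ in 𝓝 t0, ∀ p : s, deriv f (Q p (t * Complex.I)) ≠ 0 :=
    eventually_all.2 fun p => ((hdc.tendsto _).comp (hQl p)).eventually_ne (hs p.1 p.2).2
  obtain ⟨R, hR0, hR⟩ : ∃ R : ℝ, 0 < R ∧ ∀ p : s, ‖(p : ℂ)‖ < R := by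
    have h1 : ∀ᶠ R : ℝ in atTop, ∀ p : s, ‖(p : ℂ)‖ < R :=
      eventually_all.2 fun p => eventually_gt_atTop _
    exact ((eventually_gt_atTop 0).and h1).exists
  have E3 : ∀ᶠ t : ℝ in 𝓝 t0, ∀ p : s, ‖Q p (t * Complex.I)‖ < R :=
    eventually_all.2 fun p => (hQl p).norm.eventually (gt_mem_nhds (hR p))
  have E4 : ∀ᶠ t : ℝ in 𝓝 t0, ∀ p p' : s, p ≠ p' → Q p (t * Complex.I) ≠ Q p' (t * Complex.I) := by
    refine eventually_all.2 fun i => eventually_all.2 fun j => ?_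
    by_cases hij : i = j
    · simp [hij]
    · filter_upwards [((hQl i).sub (hQl j)).eventually_ne
        (sub_ne_zero.2 (fun h => hij (Subtype.ext h)))] with ε h1 _
      exact sub_ne_zero.1 h1
  obtain ⟨δ, hδ, hE⟩ := Metric.eventually_nhds_iff_ball.1 (E1.and (E2.and (E3.and E4)))
  refine ⟨t0 - δ/2, t0 + δ/2, R, by linarith, hR0, ?_⟩
  intro z hz t ht hfz
  have hopen : IsOpen (f '' {z | R < ‖z‖}) := by
    rcases AnalyticOnNhd.is_constant_or_isOpenMap (g := f) (fun z _ => hf.analyticAt z) with h | h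
    · exact absurd h hnc
    · exact h _ (isOpen_lt continuous_const continuous_norm)
  have hcrit : ((fun z => (f z).im) '' {z | deriv f z = 0}).Countable :=
    (NL_crit_countable hf hnc).image _
  have hev1 : ∀ᶠ t' : ℝ in 𝓝 t, (t' : ℂ) * Complex.I ∈ f '' {z | R < ‖z‖} := by
    have hc : Continuous (fun t : ℝ => (t : ℂ) * Complex.I) := by fun_prop
    exact (hc.tendsto t).eventually (hopen.mem_nhds ⟨z, hz, hfz⟩)
  have hev2 : ∀ᶠ t' : ℝ in 𝓝 t, t' ∈ ball t0 δ := by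
    apply isOpen_ball.mem_nhds
    rw [mem_ball, Real.dist_eq, abs_lt]
    constructor <;> linarith [ht.1, ht.2]
  obtain ⟨t', h1, ⟨z', hz', hfz'⟩, h3⟩ :=
    ((mem_closure_iff_frequently.1 (hcrit.dense_compl ℝ t)).and_eventually (hev1.and hev2)).exists
  obtain ⟨e1, e2, e3, e4⟩ := hE t' h3
  have hd : deriv f z' ≠ 0 := by
    intro h0
    apply h1
    exact ⟨z', h0, by simp [hfz']⟩
  have hinj : Function.Injective (fun p : s => Q p (t' * Complex.I)) := by
    intro p p' h
    by_contra hne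
    exact e4 p p' hne h
  have hnm : z' ∉ Finset.univ.image (fun p : s => Q p (t' * Complex.I)) := by
    intro h
    obtain ⟨p, _, hp⟩ := Finset.mem_image.1 h
    have := e3 p
    rw [hp] at this
    exact lt_asymm this hz'
  have := hmax (m+1) ⟨t', insert z' (Finset.univ.image (fun p : s => Q p (t' * Complex.I))), by
    rw [Finset.card_insert_of_notMem hnm, Finset.card_image_of_injective _ hinj]
    simp [hsm], by
    intro y hy
    rcases Finset.mem_insert.1 hy with h | h
    · rw [h]; exact ⟨hfz', hd⟩
    · obtain ⟨p, _, rfl⟩ := Finset.mem_image.1 h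
      exact ⟨e1 p, e2 p⟩⟩
  omega

open Set Topology in
lemma NL_growth {f : ℂ → ℂ} (hf : Differentiable ℂ f) {a b R : ℝ} (hab : a < b) (hR : 0 < R)
    (hgap : ∀ z, R < ‖z‖ → ∀ t ∈ Icc a b, f z ≠ t * Complex.I) :
    ∃ (C r : ℝ) (N : ℕ), ∀ z, r < ‖z‖ → ‖f z‖ ≤ C * ‖z‖ ^ N := by
  set F : ℂ → ℂ := fun w => f w⁻¹ with hF
  set A : ℂ → ℂ := fun w => (F w - a * Complex.I) / (F w - b * Complex.I) with hA
  set h : ℂ → ℂ := fun w => Complex.exp (Complex.log (A w) / 2) with hh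
  set q : ℂ → ℂ := fun w => (h w - 1) / (h w + 1) with hq
  set s : Set ℂ := ball 0 R⁻¹ with hs
  have hs0 : s ∈ 𝓝 (0:ℂ) := ball_mem_nhds _ (by positivity)
  have hin : ∀ w ∈ s \ {0}, R < ‖w⁻¹‖ := by
    rintro w ⟨hw, hw0⟩
    rw [hs, mem_ball_zero_iff] at hw
    rw [norm_inv]
    exact (lt_inv_comm₀ hR (norm_pos_iff.2 hw0)).2 hw
  have hb0 : ∀ w ∈ s \ {0}, F w - b * Complex.I ≠ 0 := fun w hw h0 =>
    hgap _ (hin w hw) b ⟨hab.le, le_rfl⟩ (sub_eq_zero.1 h0)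
  have hslit : ∀ w ∈ s \ {0}, A w ∈ Complex.slitPlane := by
    intro w hw
    by_contra hns
    rw [Complex.mem_slitPlane_iff] at hns
    push Not at hns
    obtain ⟨h1, h2⟩ := hns
    set x := -(A w).re with hx
    have hx0 : 0 ≤ x := by linarith
    have hAx : A w = -(x : ℂ) := by
      apply Complex.ext <;> simp [hx, h2]
    have h3 : F w - a * Complex.I = -(x:ℂ) * (F w - b * Complex.I) := by
      rw [← hAx, hA]; exact (div_mul_cancel₀ _ (hb0 w hw)).symm
    have hx1 : (1 + x : ℂ) ≠ 0 := by
      exact_mod_cast (by linarith : (1 + x) ≠ 0)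
    apply hgap _ (hin w hw) ((a + x * b) / (1 + x))
    · constructor
      · rw [le_div_iff₀ (by linarith)]; nlinarith
      · rw [div_le_iff₀ (by linarith)]; nlinarith
    · show F w = _
      push_cast
      field_simp
      linear_combination h3
  have hsq : ∀ w ∈ s \ {0}, h w ^ 2 = A w := by
    intro w hw
    rw [hh]; simp only
    rw [← Complex.exp_nat_mul]
    have : ((2:ℕ):ℂ) * (Complex.log (A w) / 2) = Complex.log (A w) := by push_cast; ring
    rw [this, Complex.exp_log (Complex.slitPlane_ne_zero (hslit w hw))]
  have hre : ∀ w ∈ s \ {0}, 0 < (h w).re := by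
    intro w hw
    rw [hh]; simp only
    rw [Complex.exp_re]
    apply mul_pos (Real.exp_pos _)
    have him : (Complex.log (A w) / 2).im = Complex.arg (A w) / 2 := by
      rw [show (2:ℂ) = ((2:ℝ):ℂ) by norm_num, Complex.div_ofReal_im, Complex.log_im]
    rw [him]
    apply Real.cos_pos_of_mem_Ioo
    have h1 := Complex.neg_pi_lt_arg (A w)
    have h2 := Complex.arg_le_pi (A w)
    have h3 : Complex.arg (A w) ≠ Real.pi := Complex.slitPlane_arg_ne_pi (hslit w hw)
    have h4 := lt_of_le_of_ne h2 h3
    constructor <;> linarith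
  have hh1 : ∀ w ∈ s \ {0}, h w + 1 ≠ 0 := by
    intro w hw h0
    have h1 := congrArg Complex.re h0
    simp at h1
    linarith [hre w hw]
  have hFd : DifferentiableOn ℂ F (s \ {0}) := by
    intro w hw
    exact (hf.differentiableAt.comp w (differentiableAt_inv hw.2)).differentiableWithinAt
  have hAd : DifferentiableOn ℂ A (s \ {0}) :=
    (hFd.sub_const _).div (hFd.sub_const _) hb0
  have hhd : DifferentiableOn ℂ h (s \ {0}) := ((hAd.clog hslit).div_const _).cexp
  have hqd : DifferentiableOn ℂ q (s \ {0}) := (hhd.sub_const _).div (hhd.add_const _) hh1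
  have hqb : BddAbove (norm ∘ q '' (s \ {0})) := by
    refine ⟨1, ?_⟩
    rintro _ ⟨w, hw, rfl⟩
    simp only [Function.comp, hq]
    rw [norm_div]
    apply div_le_one_of_le₀ _ (norm_nonneg _)
    have h1 := hre w hw
    rw [← sq_le_sq₀ (norm_nonneg _) (norm_nonneg _), Complex.sq_norm, Complex.sq_norm,
      Complex.normSq_apply, Complex.normSq_apply]
    simp
    nlinarith
  have hqan := (Complex.differentiableOn_update_limUnder_of_bddAbove hs0 hqd hqb).analyticAt hs0
  have hev : s \ {0} ∈ 𝓝[≠] (0:ℂ) := by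
    rw [sdiff_eq]
    exact inter_mem (mem_nhdsWithin_of_mem_nhds hs0) self_mem_nhdsWithin
  have hqm : MeromorphicAt q 0 := by
    apply hqan.meromorphicAt.congr
    filter_upwards [self_mem_nhdsWithin] with w hw
    rw [Function.update_of_ne hw]
  have hhm : MeromorphicAt (fun w => (1 + q w) / (1 - q w)) 0 :=
    ((MeromorphicAt.const 1 0).add hqm).div ((MeromorphicAt.const 1 0).sub hqm)
  have hFm : MeromorphicAt F 0 := by
    have h1 : MeromorphicAt (fun w => (a * Complex.I - b * Complex.I * ((1 + q w) / (1 - q w)) ^ 2) /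
      (1 - ((1 + q w) / (1 - q w)) ^ 2)) 0 :=
      ((MeromorphicAt.const _ 0).sub ((MeromorphicAt.const _ 0).mul (hhm.pow 2))).div
        ((MeromorphicAt.const 1 0).sub (hhm.pow 2))
    apply h1.congr
    filter_upwards [hev] with w hw
    have e1 : (1 + q w) / (1 - q w) = h w := by
      have := hh1 w hw
      have e2 : 1 - q w = 2 / (h w + 1) := by simp only [hq]; field_simp; ring
      have e3 : 1 + q w = 2 * h w / (h w + 1) := by simp only [hq]; field_simp; ring
      rw [e2, e3]; field_simp
    rw [e1, hsq w hw]
    have e4 : 1 - A w = (a - b) * Complex.I / (F w - b * Complex.I) := by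
      have := hb0 w hw
      simp only [hA]
      rw [eq_div_iff this, sub_mul, div_mul_cancel₀ _ this]
      ring
    have hab' : ((a:ℂ) - b) ≠ 0 := by
      rw [sub_ne_zero]; exact_mod_cast hab.ne
    have e5 : 1 - A w ≠ 0 := by
      rw [e4]
      exact div_ne_zero (mul_ne_zero hab' Complex.I_ne_zero) (hb0 w hw)
    rw [div_eq_iff e5]
    have e6 : A w * (F w - b * Complex.I) = F w - a * Complex.I := by
      simp only [hA]; exact div_mul_cancel₀ _ (hb0 w hw)
    linear_combination e6
  obtain ⟨N, hN⟩ := hFm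
  have hcb := hN.continuousAt.norm
  set C := ‖((0:ℂ) - 0) ^ N • F 0‖ + 1 with hC
  have hev2 : ∀ᶠ w in 𝓝 (0:ℂ), ‖(w - 0) ^ N • F w‖ < C :=
    hcb.eventually (gt_mem_nhds (by simp only [hC]; linarith))
  obtain ⟨δ, hδ, hE⟩ := Metric.eventually_nhds_iff_ball.1 hev2
  refine ⟨C, δ⁻¹, N, fun z hz => ?_⟩
  have hzp : 0 < ‖z‖ := (inv_pos.2 hδ).trans hz
  have h1 := hE z⁻¹ (by
    rw [mem_ball_zero_iff, norm_inv]
    exact (inv_lt_comm₀ hzp hδ).2 hz)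
  simp only [hF, inv_inv, sub_zero, norm_smul, norm_pow, norm_inv] at h1
  rw [inv_pow, inv_mul_lt_iff₀ (by positivity)] at h1
  rw [mul_comm]; exact h1.le

open Set Topology in
lemma NL_poly {f : ℂ → ℂ} (hf : Differentiable ℂ f) {C r : ℝ} {N : ℕ}
    (hg : ∀ z, r < ‖z‖ → ‖f z‖ ≤ C * ‖z‖ ^ N) : ∃ P : Polynomial ℂ, ∀ z, f z = P.eval z := by
  have hz : ∀ m, N < m → iteratedDeriv m f 0 = 0 := by
    intro m hm
    have h1 : ∀ᶠ ρ : ℝ in atTop, ‖iteratedDeriv m f 0‖ ≤ (m.factorial * C) * ρ⁻¹ ^ (m - N) := by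
      filter_upwards [eventually_gt_atTop (max r 0)] with ρ hρ
      have hρ0 : 0 < ρ := (le_max_right _ _).trans_lt hρ
      have h2 := Complex.norm_iteratedDeriv_le_of_forall_mem_sphere_norm_le (c := 0) m hρ0
        hf.diffContOnCl (C := C * ρ ^ N) (by
          intro z hz
          rw [mem_sphere_zero_iff_norm] at hz
          have := hg z (by rw [hz]; exact (le_max_left _ _).trans_lt hρ)
          rwa [hz] at this)
      refine h2.trans (le_of_eq ?_)
      obtain ⟨d, rfl⟩ := Nat.exists_eq_add_of_lt hm
      rw [show N + d + 1 - N = d + 1 by omega, inv_pow, add_assoc, pow_add]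
      field_simp
    have h2 : Tendsto (fun ρ : ℝ => (m.factorial * C) * ρ⁻¹ ^ (m - N)) atTop (𝓝 0) := by
      have := ((tendsto_inv_atTop_zero (𝕜 := ℝ)).pow (m - N)).const_mul (m.factorial * C)
      rwa [zero_pow (by omega), mul_zero] at this
    have h3 := ge_of_tendsto h2 h1
    exact norm_le_zero_iff.1 h3
  refine ⟨∑ m ∈ Finset.range (N+1), Polynomial.C ((m.factorial : ℂ)⁻¹ * iteratedDeriv m f 0) *
    Polynomial.X ^ m, fun z => ?_⟩
  rw [← Complex.taylorSeries_eq_of_entire' 0 z hf, tsum_eq_sum (s := Finset.range (N+1))]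
  · simp [Polynomial.eval_finsetSum]
  · intro m hm
    rw [hz m (by simpa using hm)]
    simp

open Set Topology in
lemma NL_holo {f : ℂ → ℂ} (hf : Differentiable ℂ f) {k : ℕ} (hk : 1 ≤ k)
    (hfin : (nodalComponents {z | (f z).re ≠ 0}).Finite)
    (hcard : (nodalComponents {z | (f z).re ≠ 0}).ncard ≤ k) :
    ∃ P : Polynomial ℂ, P.natDegree ≤ k - 1 ∧ ∀ z, f z = P.eval z := by
  by_cases hnc : ∃ c, ∀ z, f z = c
  · obtain ⟨c, hc⟩ := hnc
    exact ⟨Polynomial.C c, by simp, by simp [hc]⟩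
  have hcc := NL_crit_countable hf hnc
  have hN : ∀ (t : ℝ) (s : Finset ℂ), (∀ z ∈ s, f z = t * Complex.I ∧ deriv f z ≠ 0) →
      s.card + 1 ≤ k := by
    intro t s hs
    exact NL_count hf (hcc.image _) hk hfin hcard (fun j => (s.equivFin.symm j : ℂ))
      (Subtype.val_injective.comp s.equivFin.symm.injective) (t * Complex.I) (by simp)
      (fun j => (hs _ (s.equivFin.symm j).2).1) (fun j => (hs _ (s.equivFin.symm j).2).2)
  obtain ⟨a, b, R, hab, hR, hgap⟩ := NL_gap hf hnc (N := k) (fun t s hs => by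
    have := hN t s hs
    omega)
  obtain ⟨C, r, N, hg⟩ := NL_growth hf hab hR hgap
  obtain ⟨P, hP⟩ := NL_poly hf hg
  refine ⟨P, ?_, hP⟩
  obtain ⟨t, ht⟩ := ((hcc.image (fun z => (f z).im)).dense_compl ℝ).nonempty
  have hfd : ∀ z, deriv f z = P.derivative.eval z := by
    intro z
    rw [show f = fun z => P.eval z from funext hP, Polynomial.deriv]
  set q := P - Polynomial.C (t * Complex.I) with hq
  have hdq : q.natDegree = P.natDegree := Polynomial.natDegree_sub_C
  have hq0 : q ≠ 0 := by
    intro h0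
    apply hnc
    refine ⟨t * Complex.I, fun z => ?_⟩
    have := congrArg (Polynomial.eval z) h0
    simp only [hq, Polynomial.eval_sub, Polynomial.eval_C, Polynomial.eval_zero] at this
    rw [hP]; exact sub_eq_zero.1 this
  have hroot : ∀ z, q.IsRoot z → f z = t * Complex.I ∧ deriv f z ≠ 0 := by
    intro z hz
    have h1 : f z = t * Complex.I := by
      simp only [hq, Polynomial.IsRoot.def, Polynomial.eval_sub, Polynomial.eval_C] at hz
      rw [hP]; exact sub_eq_zero.1 hz
    exact ⟨h1, fun h0 => ht ⟨z, h0, by simp [h1]⟩⟩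
  have hnd : q.roots.Nodup := by
    classical
    rw [Multiset.nodup_iff_count_le_one]
    intro z
    rw [Polynomial.count_roots]
    by_contra hlt
    push Not at hlt
    have h1 := (Polynomial.one_lt_rootMultiplicity_iff_isRoot hq0).1 hlt
    apply (hroot z h1.1).2
    have h2 := h1.2
    simp only [hq, Polynomial.IsRoot.def, Polynomial.derivative_sub, Polynomial.derivative_C,
      sub_zero] at h2
    rw [hfd, h2]
  have hc := hN t q.roots.toFinset (fun z hz => hroot z (by
    rw [Multiset.mem_toFinset] at hz
    exact Polynomial.isRoot_of_mem_roots hz))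
  rw [Multiset.toFinset_card_of_nodup hnd,
    Polynomial.splits_iff_card_roots.1 (IsAlgClosed.splits q), hdq] at hc
  omega

/-- real and imaginary parts of a complex polynomial are real polynomials in two variables -/
lemma NL_pow_parts (n : ℕ) : ∃ A B : MvPolynomial (Fin 2) ℝ, A.totalDegree ≤ n ∧
    B.totalDegree ≤ n ∧ ∀ v : Fin 2 → ℝ, ((v 0 : ℂ) + v 1 * Complex.I) ^ n =
      (MvPolynomial.eval v A : ℂ) + (MvPolynomial.eval v B : ℂ) * Complex.I := by
  induction n with
  | zero => exact ⟨1, 0, by simp, by simp, by simp⟩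
  | succ n ih =>
    obtain ⟨A, B, hA, hB, h⟩ := ih
    have hX : ∀ i : Fin 2, (MvPolynomial.X i : MvPolynomial (Fin 2) ℝ).totalDegree ≤ 1 := fun i =>
      (MvPolynomial.totalDegree_X i).le
    refine ⟨A * MvPolynomial.X 0 - B * MvPolynomial.X 1, A * MvPolynomial.X 1 + B * MvPolynomial.X 0,
      ?_, ?_, ?_⟩
    · refine (MvPolynomial.totalDegree_sub _ _).trans (max_le ?_ ?_) <;>
      refine (MvPolynomial.totalDegree_mul _ _).trans (add_le_add (by assumption) (hX _))
    · refine (MvPolynomial.totalDegree_add _ _).trans (max_le ?_ ?_) <;>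
      refine (MvPolynomial.totalDegree_mul _ _).trans (add_le_add (by assumption) (hX _))
    · intro v
      rw [pow_succ, h v]
      simp only [map_sub, map_add, map_mul, MvPolynomial.eval_X]
      push_cast
      linear_combination (MvPolynomial.eval v B : ℂ) * (v 1) * Complex.I_sq

lemma NL_re_poly (P : Polynomial ℂ) : ∃ Q : MvPolynomial (Fin 2) ℝ, Q.totalDegree ≤ P.natDegree ∧
    ∀ v : Fin 2 → ℝ, (P.eval ((v 0 : ℂ) + v 1 * Complex.I)).re = MvPolynomial.eval v Q := by
  choose A B hA hB h using NL_pow_parts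
  refine ⟨∑ n ∈ Finset.range (P.natDegree + 1),
    (MvPolynomial.C (P.coeff n).re * A n - MvPolynomial.C (P.coeff n).im * B n), ?_, ?_⟩
  · apply MvPolynomial.totalDegree_finsetSum_le
    intro n hn
    have hn' : n ≤ P.natDegree := by simpa [Nat.lt_succ_iff] using hn
    refine (MvPolynomial.totalDegree_sub _ _).trans (max_le ?_ ?_)
    · refine (MvPolynomial.totalDegree_mul _ _).trans ?_
      rw [MvPolynomial.totalDegree_C, zero_add]
      exact (hA n).trans hn'
    · refine (MvPolynomial.totalDegree_mul _ _).trans ?_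
      rw [MvPolynomial.totalDegree_C, zero_add]
      exact (hB n).trans hn'
  · intro v
    rw [Polynomial.eval_eq_sum_range, Complex.re_sum, map_sum]
    apply Finset.sum_congr rfl
    intro n _
    rw [h n v]
    simp

open InnerProductSpace in
lemma NL_harm {u : EuclideanSpace ℝ (Fin 2) → ℝ} (hu : HarmonicFn u) :
    ∃ f : ℂ → ℂ, Differentiable ℂ f ∧
      ∀ z, (f z).re = u (Complex.orthonormalBasisOneI.repr z) := by
  set g : ℂ →L[ℝ] EuclideanSpace ℝ (Fin 2) :=
    Complex.orthonormalBasisOneI.repr.toContinuousLinearEquiv.toContinuousLinearMap with hg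
  have hgb : ∀ i, g (Complex.orthonormalBasisOneI i) = EuclideanSpace.single i 1 := fun i =>
    Complex.orthonormalBasisOneI.repr_self i
  have h1 : HarmonicOnNhd (u ∘ g) Set.univ := by
    intro x _
    refine ⟨(hu.1.comp g.contDiff).contDiffAt, Eventually.of_forall fun y => ?_⟩
    rw [laplacian_eq_iteratedFDeriv_orthonormalBasis _ Complex.orthonormalBasisOneI]
    have h2 := hu.2 (g y)
    rw [lapl] at h2
    simp only [Pi.zero_apply]
    rw [← h2]
    apply Finset.sum_congr rfl
    intro i _
    rw [g.iteratedFDeriv_comp_right hu.1 y (i := 2) (by norm_cast),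
      ContinuousMultilinearMap.compContinuousLinearMap_apply, iteratedFDeriv_two_apply]
    simp only [Matrix.cons_val_zero, Matrix.cons_val_one, hgb]
    have hd : DifferentiableAt ℝ (fderiv ℝ u) (g y) :=
      ((hu.1.fderiv_right (m := 1) (by norm_num)).differentiable (by norm_num)) _
    rw [fderiv_clm_apply hd (differentiableAt_const _)]
    simp
  obtain ⟨F, hF1, hF2⟩ := h1.exists_analyticOnNhd_univ_re_eq
  exact ⟨F, fun z => (hF1 z trivial).differentiableAt, fun z => congrFun hF2 z⟩

lemma NL_components {X Y : Type*} [TopologicalSpace X] [TopologicalSpace Y] (e : X ≃ₜ Y)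
    (S : Set X) : nodalComponents (e '' S) = (fun C => e '' C) '' nodalComponents S := by
  ext C
  constructor
  · rintro ⟨_, ⟨x, hx, rfl⟩, rfl⟩
    exact ⟨_, ⟨x, hx, rfl⟩, e.image_connectedComponentIn hx⟩
  · rintro ⟨_, ⟨x, hx, rfl⟩, rfl⟩
    exact ⟨e x, ⟨x, hx, rfl⟩, (e.image_connectedComponentIn hx).symm⟩

/-- **Nadirashvili's Liouville theorem** (Proposition 5.2): an entire harmonic function on ℝ²
with at most `k` nodal regions is a polynomial of degree at most `k - 1`. -/
theorem nadirashvili_liouville (k : ℕ) (hk : 1 ≤ k)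
    (u : EuclideanSpace ℝ (Fin 2) → ℝ) (hu : HarmonicFn u)
    (hfin : (nodalComponents {x | u x ≠ 0}).Finite)
    (hcard : (nodalComponents {x | u x ≠ 0}).ncard ≤ k) :
    ∃ P : MvPolynomial (Fin 2) ℝ, P.totalDegree ≤ k - 1 ∧ ∀ x, u x = polyFun P x := by
  obtain ⟨f, hf, hfu⟩ := NL_harm hu
  set e : EuclideanSpace ℝ (Fin 2) ≃ₜ ℂ :=
    Complex.orthonormalBasisOneI.repr.symm.toHomeomorph with he
  have hS : {z | (f z).re ≠ 0} = e '' {x | u x ≠ 0} := by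
    ext z
    constructor
    · intro hz
      refine ⟨Complex.orthonormalBasisOneI.repr z, ?_,
        Complex.orthonormalBasisOneI.repr.symm_apply_apply z⟩
      show u _ ≠ 0
      rw [← hfu]; exact hz
    · rintro ⟨x, hx, rfl⟩
      show (f _).re ≠ 0
      rw [hfu]
      have : Complex.orthonormalBasisOneI.repr (e x) = x :=
        Complex.orthonormalBasisOneI.repr.apply_symm_apply x
      rw [this]; exact hx
  have hfin' : (nodalComponents {z | (f z).re ≠ 0}).Finite := by
    rw [hS, NL_components]; exact hfin.image _
  have hcard' : (nodalComponents {z | (f z).re ≠ 0}).ncard ≤ k := by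
    rw [hS, NL_components]; exact (Set.ncard_image_le hfin).trans hcard
  obtain ⟨P, hP, hPf⟩ := NL_holo hf hk hfin' hcard'
  obtain ⟨Q, hQ, hQe⟩ := NL_re_poly P
  refine ⟨Q, hQ.trans hP, fun x => ?_⟩
  have h1 := hfu (Complex.orthonormalBasisOneI.repr.symm x)
  rw [LinearIsometryEquiv.apply_symm_apply, hPf, Complex.orthonormalBasisOneI_repr_symm_apply] at h1
  rw [← h1, polyFun]
  exact hQe (fun i => x i)
end
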